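/- arXiv:1505.02978 — 6 statements merged into one kernel-verified Lean document; each statement's English description precedes it below -/
import Mathlib

section
/- Let γ : ℝ × [0,T) → ℝ², γ(u,t) = (x(u,t), y(u,t)), be a curve diffusion flow (a smooth family of closed regular plane curves satisfying ⟨∂_t γ, ν⟩ = −κ_ss) such that at every time t the curve γ(·,t) has winding number zero, i.e. ∫₀^{2π} κ |∂_u γ| du = 0. Then T ≤ L(0)⁴ / (64 π⁴), where L(0) is the length of the initial curve. -/
open Real MeasureTheory Filter

/-- Euclidean inner product on `ℝ × ℝ`. -/
def innerP (a b : ℝ × ℝ) : ℝ := a.1 * b.1 + a.2 * b.2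

/-- Speed `|γ'|` of a plane curve in a general parametrisation. -/
noncomputable def speed (γ : ℝ → ℝ × ℝ) (u : ℝ) : ℝ :=
  Real.sqrt ((deriv γ u).1 ^ 2 + (deriv γ u).2 ^ 2)

/-- Unit normal `ν = |γ'|⁻¹ (y', -x')`. -/
noncomputable def nuG (γ : ℝ → ℝ × ℝ) (u : ℝ) : ℝ × ℝ :=
  ((deriv γ u).2 / speed γ u, -(deriv γ u).1 / speed γ u)

/-- Arc-length derivative `∂_s = |γ'|⁻¹ ∂_u` of a scalar function. -/
noncomputable def arcD (γ : ℝ → ℝ × ℝ) (f : ℝ → ℝ) (u : ℝ) : ℝ :=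
  (speed γ u)⁻¹ * deriv f u

/-- Arc-length derivative of a vector-valued function. -/
noncomputable def arcDV (γ : ℝ → ℝ × ℝ) (F : ℝ → ℝ × ℝ) (u : ℝ) : ℝ × ℝ :=
  (speed γ u)⁻¹ • deriv F u

/-- Curvature `κ = ⟨∂_s² γ, ν⟩`. -/
noncomputable def curvG (γ : ℝ → ℝ × ℝ) (u : ℝ) : ℝ :=
  innerP (arcDV γ (arcDV γ γ) u) (nuG γ u)

/-- `κ_s`, the arc-length derivative of the curvature. -/
noncomputable def curvGS (γ : ℝ → ℝ × ℝ) (u : ℝ) : ℝ := arcD γ (curvG γ) u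

/-- `κ_ss`, the second arc-length derivative of the curvature. -/
noncomputable def curvGSS (γ : ℝ → ℝ × ℝ) (u : ℝ) : ℝ := arcD γ (curvGS γ) u

/-- Length of the closed curve `γ(·,t)` over one period `[0, 2π]`. -/
noncomputable def clen (γ : ℝ → ℝ → ℝ × ℝ) (t : ℝ) : ℝ :=
  ∫ u in (0:ℝ)..(2 * Real.pi), speed (fun u' => γ u' t) u

/-- Wirtinger's inequality on an interval. -/
theorem wirtinger_interval {L : ℝ} (hL : 0 < L) {g g' : ℝ → ℝ}
    (hg : ∀ x, HasDerivAt g (g' x) x) (hg' : Continuous g') (hper : g L = g 0)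
    (hmean : ∫ x in (0:ℝ)..L, g x = 0) :
    4 * π ^ 2 * ∫ x in (0:ℝ)..L, g x ^ 2 ≤ L ^ 2 * ∫ x in (0:ℝ)..L, g' x ^ 2 := by
  have hcont : Continuous g := continuous_iff_continuousAt.2 fun x => (hg x).continuousAt
  have memLp : ∀ f : ℝ → ℝ, Continuous f →
      MemLp (fun x => (f x : ℂ)) 2 (volume.restrict (Set.Ioc 0 L)) := fun f hf =>
    (memLp_two_iff_integrable_sq_norm
      (Complex.continuous_ofReal.comp hf).aestronglyMeasurable).2
      ((((Complex.continuous_ofReal.comp hf).norm.pow 2).integrableOn_Icc (a := 0) (b := L)).mono_set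
        Set.Ioc_subset_Icc_self)
  have parseval : ∀ f : ℝ → ℝ, Continuous f →
      HasSum (fun n : ℤ => ‖fourierCoeffOn hL (fun x => (f x : ℂ)) n‖ ^ 2)
        (L⁻¹ * ∫ x in (0:ℝ)..L, f x ^ 2) := fun f hf => by
    simpa using hasSum_sq_fourierCoeffOn (f := fun x => (f x : ℂ)) hL (memLp f hf)
  have coeff_zero : fourierCoeffOn hL (fun x => (g x : ℂ)) 0 = 0 := by
    simp [fourierCoeffOn_eq_integral, intervalIntegral.integral_ofReal, hmean]
  have key : ∀ n : ℤ, (2 * π) ^ 2 * ‖fourierCoeffOn hL (fun x => (g x : ℂ)) n‖ ^ 2 ≤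
      L ^ 2 * ‖fourierCoeffOn hL (fun x => (g' x : ℂ)) n‖ ^ 2 := by
    intro n
    rcases eq_or_ne n 0 with rfl | hn
    · rw [coeff_zero]; simp; positivity
    · rw [fourierCoeffOn_of_hasDerivAt hL hn (fun x _ => (hg x).ofReal_comp)
        ((Complex.continuous_ofReal.comp hg').intervalIntegrable _ _)]
      have hn1 : (1:ℝ) ≤ (|n| : ℤ) := by exact_mod_cast Int.one_le_abs hn
      have hn2 : (1:ℝ) ≤ (n:ℝ) ^ 2 := by
        rw [← sq_abs]; push_cast at hn1; nlinarith
      simp only [hper, sub_self, mul_zero, zero_sub, norm_mul, norm_neg, norm_div, norm_one,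
        Complex.norm_I, Complex.norm_intCast, Complex.norm_real, Complex.ofReal_zero, sub_zero,
        Complex.norm_ofNat, mul_one, mul_pow, div_pow, one_pow, Real.norm_eq_abs, sq_abs]
      have hpi := Real.pi_pos
      rw [show ∀ a : ℝ, 2 ^ 2 * π ^ 2 * (1 / (2 ^ 2 * π ^ 2 * (n:ℝ) ^ 2) * (L ^ 2 * a)) =
        (L ^ 2 * a) / (n:ℝ) ^ 2 from fun a => by field_simp]
      exact div_le_self (by positivity) hn2
  have := hasSum_le key ((parseval g hcont).mul_left _) ((parseval g' hg').mul_left _)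
  have h2 := mul_le_mul_of_nonneg_left this hL.le
  field_simp at h2
  linarith

/-- Wirtinger's inequality with respect to a weight `v`, the density of arc length. -/
theorem wirtinger_weighted {v f f' : ℝ → ℝ} {c a : ℝ} (ha : 0 < a) (hc : 0 < c)
    (hv : Continuous v) (hvc : ∀ u, c ≤ v u)
    (hf : ∀ u, HasDerivAt f (f' u) u) (hf' : Continuous f') (hper : f a = f 0)
    (hmean : ∫ u in (0:ℝ)..a, f u * v u = 0) :
    4 * π ^ 2 * ∫ u in (0:ℝ)..a, f u ^ 2 * v u ≤
      (∫ u in (0:ℝ)..a, v u) ^ 2 * ∫ u in (0:ℝ)..a, f' u ^ 2 / v u := by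
  have hpos : ∀ u, 0 < v u := fun u => hc.trans_le (hvc u)
  set s : ℝ → ℝ := fun u => ∫ x in (0:ℝ)..u, v x with hs
  have hsd : ∀ u, HasDerivAt s (v u) u := fun u =>
    intervalIntegral.integral_hasDerivAt_right (hv.intervalIntegrable _ _)
      (hv.stronglyMeasurableAtFilter _ _) hv.continuousAt
  have hs0 : s 0 = 0 := by simp [hs]
  have hmono : StrictMono s := strictMono_of_hasDerivAt_pos hsd hpos
  have hscont : Continuous s := continuous_iff_continuousAt.2 fun x => (hsd x).continuousAt
  have hlin : Monotone fun u => s u - c * u :=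
    monotone_of_hasDerivAt_nonneg (f' := fun u => v u - c)
      (fun u => (hsd u).sub (by simpa using (hasDerivAt_id u).const_mul c))
      (fun u => sub_nonneg.2 (hvc u))
  have hsurj : Function.Surjective s := by
    refine hscont.surjective ?_ ?_
    · refine tendsto_atTop_mono' _ ?_ (tendsto_id.const_mul_atTop hc)
      filter_upwards [eventually_ge_atTop 0] with u hu
      have := hlin hu
      simp [hs0] at this; simpa using this
    · refine tendsto_atBot_mono' _ ?_ (tendsto_id.const_mul_atBot hc)
      filter_upwards [eventually_le_atBot 0] with u hu
      have := hlin hu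
      simp [hs0] at this; simpa using this
  set e := hmono.orderIsoOfSurjective s hsurj with he
  have hes : ∀ u, e.symm (s u) = u := fun u => e.symm_apply_apply u
  have hse : ∀ x, s (e.symm x) = x := fun x => e.apply_symm_apply x
  have hed : ∀ x, HasDerivAt e.symm (v (e.symm x))⁻¹ x := fun x =>
    HasDerivAt.of_local_left_inverse e.symm.continuous.continuousAt (hsd _) (hpos _).ne'
      (Eventually.of_forall hse)
  have sub : ∀ h : ℝ → ℝ, Continuous h →
      ∫ x in (0:ℝ)..s a, h (e.symm x) = ∫ u in (0:ℝ)..a, h u * v u := fun h hh => by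
    have := intervalIntegral.integral_comp_mul_deriv (a := 0) (b := a) (f := s) (f' := v)
      (g := fun x => h (e.symm x)) (fun u _ => hsd u) hv.continuousOn
      (hh.comp e.symm.continuous)
    rw [hs0] at this
    rw [← this]; simp [hes]
  have hfc : Continuous f := continuous_iff_continuousAt.2 fun x => (hf x).continuousAt
  have hL : 0 < s a := hs0 ▸ hmono ha
  have hq : Continuous fun u => f' u * (v u)⁻¹ := hf'.mul (hv.inv₀ fun u => (hpos u).ne')
  have W := wirtinger_interval hL (g := fun x => f (e.symm x))
    (g' := fun x => f' (e.symm x) * (v (e.symm x))⁻¹)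
    (fun x => (hf _).comp x (hed x)) (hq.comp e.symm.continuous)
    (by rw [hes, ← hs0, hes]; exact hper) (by rw [sub f hfc, hmean])
  rw [sub (fun u => f u ^ 2) (hfc.pow 2), sub (fun u => (f' u * (v u)⁻¹) ^ 2) (hq.pow 2)] at W
  convert W using 4 with u
  have := (hpos u).ne'
  field_simp

theorem HasDerivAt.fst_real {F : ℝ → ℝ × ℝ} {F' : ℝ × ℝ} {u : ℝ} (h : HasDerivAt F F' u) :
    HasDerivAt (fun x => (F x).1) F'.1 u :=
  (hasFDerivAt_fst (𝕜 := ℝ) (p := F u)).comp_hasDerivAt u h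

theorem HasDerivAt.snd_real {F : ℝ → ℝ × ℝ} {F' : ℝ × ℝ} {u : ℝ} (h : HasDerivAt F F' u) :
    HasDerivAt (fun x => (F x).2) F'.2 u :=
  (hasFDerivAt_snd (𝕜 := ℝ) (p := F u)).comp_hasDerivAt u h

theorem sq_add_sq_pos_of_ne_zero {a : ℝ × ℝ} (ha : a ≠ 0) : 0 < a.1 ^ 2 + a.2 ^ 2 := by
  by_contra! h
  exact ha (Prod.ext (by simp; nlinarith [sq_nonneg a.1, sq_nonneg a.2])
    (by simp; nlinarith [sq_nonneg a.1, sq_nonneg a.2]))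

section StaticCurve

variable {c : ℝ → ℝ × ℝ}

theorem speed_pos (hreg : ∀ u, deriv c u ≠ 0) (u : ℝ) : 0 < speed c u :=
  Real.sqrt_pos.2 (sq_add_sq_pos_of_ne_zero (hreg u))

theorem contDiff_deriv {E : Type*} [NormedAddCommGroup E] [NormedSpace ℝ E] {f : ℝ → E}
    (hf : ContDiff ℝ (⊤ : ℕ∞) f) : ContDiff ℝ (⊤ : ℕ∞) (deriv f) :=
  (contDiff_infty_iff_deriv.1 hf).2

theorem periodic_deriv {E : Type*} [NormedAddCommGroup E] [NormedSpace ℝ E] {f : ℝ → E} {a : ℝ}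
    (hf : Function.Periodic f a) : Function.Periodic (deriv f) a := fun u => by
  rw [← deriv_comp_add_const, hf.funext]

theorem contDiff_speed (hc : ContDiff ℝ (⊤ : ℕ∞) c) (hreg : ∀ u, deriv c u ≠ 0) :
    ContDiff ℝ (⊤ : ℕ∞) (speed c) :=
  (((contDiff_deriv hc).fst.pow 2).add ((contDiff_deriv hc).snd.pow 2)).sqrt
    fun u => (sq_add_sq_pos_of_ne_zero (hreg u)).ne'

theorem contDiff_speed_inv (hc : ContDiff ℝ (⊤ : ℕ∞) c) (hreg : ∀ u, deriv c u ≠ 0) :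
    ContDiff ℝ (⊤ : ℕ∞) fun u => (speed c u)⁻¹ :=
  (contDiff_speed hc hreg).inv fun u => (speed_pos hreg u).ne'

theorem contDiff_arcD (hc : ContDiff ℝ (⊤ : ℕ∞) c) (hreg : ∀ u, deriv c u ≠ 0) {f : ℝ → ℝ}
    (hf : ContDiff ℝ (⊤ : ℕ∞) f) : ContDiff ℝ (⊤ : ℕ∞) (arcD c f) :=
  (contDiff_speed_inv hc hreg).mul (contDiff_deriv hf)

theorem contDiff_arcDV (hc : ContDiff ℝ (⊤ : ℕ∞) c) (hreg : ∀ u, deriv c u ≠ 0)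
    {F : ℝ → ℝ × ℝ} (hF : ContDiff ℝ (⊤ : ℕ∞) F) : ContDiff ℝ (⊤ : ℕ∞) (arcDV c F) :=
  (contDiff_speed_inv hc hreg).smul (contDiff_deriv hF)

theorem contDiff_curvG (hc : ContDiff ℝ (⊤ : ℕ∞) c) (hreg : ∀ u, deriv c u ≠ 0) :
    ContDiff ℝ (⊤ : ℕ∞) (curvG c) := by
  have h1 := contDiff_arcDV hc hreg (contDiff_arcDV hc hreg hc)
  have h2 := contDiff_deriv hc
  have h3 := contDiff_speed hc hreg
  have h0 : ∀ u, speed c u ≠ 0 := fun u => (speed_pos hreg u).ne'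
  exact (h1.fst.mul (h2.snd.div h3 h0)).add (h1.snd.mul (h2.fst.neg.div h3 h0))

theorem periodic_speed {a : ℝ} (hper : Function.Periodic c a) :
    Function.Periodic (speed c) a := fun u => by
  simp only [speed, periodic_deriv hper u]

theorem periodic_arcDV {a : ℝ} (hper : Function.Periodic c a) {F : ℝ → ℝ × ℝ}
    (hF : Function.Periodic F a) : Function.Periodic (arcDV c F) a := fun u => by
  simp only [arcDV, periodic_speed hper u, periodic_deriv hF u]

theorem periodic_arcD {a : ℝ} (hper : Function.Periodic c a) {f : ℝ → ℝ}
    (hf : Function.Periodic f a) : Function.Periodic (arcD c f) a := fun u => by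
  simp only [arcD, periodic_speed hper u, periodic_deriv hf u]

theorem periodic_curvG {a : ℝ} (hper : Function.Periodic c a) :
    Function.Periodic (curvG c) a := fun u => by
  simp only [curvG, nuG, periodic_arcDV hper (periodic_arcDV hper hper) u, periodic_speed hper u,
    periodic_deriv hper u]

theorem arcDV_self_sq_add_sq (hreg : ∀ u, deriv c u ≠ 0) (u : ℝ) :
    (arcDV c c u).1 ^ 2 + (arcDV c c u).2 ^ 2 = 1 := by
  have h0 := (speed_pos hreg u).ne'
  have h1 : speed c u ^ 2 = (deriv c u).1 ^ 2 + (deriv c u).2 ^ 2 := Real.sq_sqrt (by positivity)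
  simp only [arcDV, Prod.smul_fst, Prod.smul_snd, smul_eq_mul]
  field_simp
  exact h1.symm

theorem nuG_eq (c : ℝ → ℝ × ℝ) (u : ℝ) : nuG c u = ((arcDV c c u).2, -(arcDV c c u).1) := by
  simp only [nuG, arcDV, Prod.smul_fst, Prod.smul_snd, smul_eq_mul]
  ext <;> simp only <;> ring

/-- Frenet's formula for the unit tangent. -/
theorem hasDerivAt_arcDV_self (hc : ContDiff ℝ (⊤ : ℕ∞) c) (hreg : ∀ u, deriv c u ≠ 0) (u : ℝ) :
    HasDerivAt (arcDV c c) ((speed c u * curvG c u) • nuG c u) u := by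
  have hd : HasDerivAt (arcDV c c) (deriv (arcDV c c) u) u :=
    ((contDiff_arcDV hc hreg hc).differentiable (by simp) u).hasDerivAt
  have h0 := (speed_pos hreg u).ne'
  have hunit := arcDV_self_sq_add_sq hreg u
  have horth : (arcDV c c u).1 * (deriv (arcDV c c) u).1
      + (arcDV c c u).2 * (deriv (arcDV c c) u).2 = 0 := by
    have h := (hd.fst_real.pow 2).add (hd.snd_real.pow 2)
    have h' : HasDerivAt (fun _ : ℝ => (1:ℝ)) _ u :=
      h.congr_of_eventuallyEq (Eventually.of_forall fun x => (arcDV_self_sq_add_sq hreg x).symm)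
    have := h'.unique (hasDerivAt_const u 1)
    simp at this
    linarith
  convert hd using 1
  have hcurv : speed c u * curvG c u = (deriv (arcDV c c) u).1 * (arcDV c c u).2
      - (deriv (arcDV c c) u).2 * (arcDV c c u).1 := by
    rw [curvG, nuG_eq, innerP, arcDV]
    simp only [Prod.smul_fst, Prod.smul_snd, smul_eq_mul]
    field_simp
    ring
  rw [hcurv, nuG_eq]
  generalize arcDV c c u = τ at *
  generalize deriv (arcDV c c) u = d at *
  ext
  · simp only [Prod.smul_fst, smul_eq_mul]
    linear_combination d.1 * hunit - τ.1 * horth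
  · simp only [Prod.smul_snd, smul_eq_mul]
    linear_combination d.2 * hunit - τ.2 * horth

theorem exists_pos_le_of_periodic {v : ℝ → ℝ} {a : ℝ} (ha : 0 < a) (hv : Continuous v)
    (hpos : ∀ u, 0 < v u) (hper : Function.Periodic v a) : ∃ m, 0 < m ∧ ∀ u, m ≤ v u := by
  obtain ⟨x, -, hx⟩ := isCompact_Icc.exists_isMinOn (Set.nonempty_Icc.2 ha.le)
    (hv.continuousOn (s := Set.Icc 0 a))
  refine ⟨v x, hpos x, fun u => ?_⟩
  obtain ⟨y, hy, hyu⟩ := hper.exists_mem_Ico₀ ha u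
  rw [hyu]
  exact hx (Set.Ico_subset_Icc_self hy)

/-- A closed curve of vanishing total curvature satisfies `16 π⁴ ≤ L³ ∫ κ_s² ds`. -/
theorem length_cube_mul_integral_ge (hc : ContDiff ℝ (⊤ : ℕ∞) c)
    (hper : Function.Periodic c (2 * π)) (hreg : ∀ u, deriv c u ≠ 0)
    (hwind : ∫ u in (0:ℝ)..(2 * π), curvG c u * speed c u = 0) :
    16 * π ^ 4 ≤ (∫ u in (0:ℝ)..(2 * π), speed c u) ^ 3 *
      ∫ u in (0:ℝ)..(2 * π), deriv (curvG c) u ^ 2 / speed c u := by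
  have ha : 0 < 2 * π := by positivity
  have hv := (contDiff_speed hc hreg).continuous
  have hvpos := speed_pos hreg
  have hK := contDiff_curvG hc hreg
  have hτ := (contDiff_arcDV hc hreg hc).continuous
  have hν : Continuous (nuG c) := by
    rw [funext (nuG_eq c)]; exact hτ.snd.prodMk hτ.fst.neg
  obtain ⟨m, hm, hmv⟩ := exists_pos_le_of_periodic ha hv hvpos (periodic_speed hper)
  have hcd : ∀ u, HasDerivAt c (deriv c u) u := fun u =>
    (hc.differentiable (by simp) u).hasDerivAt
  have hcc := (contDiff_deriv hc).continuous
  have hFr := hasDerivAt_arcDV_self hc hreg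
  have hFrc : Continuous fun u => (speed c u * curvG c u) • nuG c u :=
    (hv.mul hK.continuous).smul hν
  have hτper : arcDV c c (2 * π) = arcDV c c 0 := by
    simpa using periodic_arcDV hper hper 0
  have hcper : c (2 * π) = c 0 := by simpa using hper 0
  have W := wirtinger_weighted ha hm hv hmv
    (fun u => (hK.differentiable (by simp) u).hasDerivAt) (contDiff_deriv hK).continuous
    (by simpa using periodic_curvG hper 0) hwind
  have W1 := wirtinger_weighted (f := fun u => (arcDV c c u).1) ha hm hv hmv
    (fun u => (hFr u).fst_real) hFrc.fst
    (by rw [hτper]) (by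
      have h := intervalIntegral.integral_eq_sub_of_hasDerivAt (a := 0) (b := 2 * π)
        (fun u _ => (hcd u).fst_real) (hcc.fst.intervalIntegrable _ _)
      rw [hcper, sub_self] at h
      refine (intervalIntegral.integral_congr fun u _ => ?_).trans h
      have := (hvpos u).ne'
      simp only [arcDV, Prod.smul_fst, smul_eq_mul]
      field_simp)
  have W2 := wirtinger_weighted (f := fun u => (arcDV c c u).2) ha hm hv hmv
    (fun u => (hFr u).snd_real) hFrc.snd
    (by rw [hτper]) (by
      have h := intervalIntegral.integral_eq_sub_of_hasDerivAt (a := 0) (b := 2 * π)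
        (fun u _ => (hcd u).snd_real) (hcc.snd.intervalIntegrable _ _)
      rw [hcper, sub_self] at h
      refine (intervalIntegral.integral_congr fun u _ => ?_).trans h
      have := (hvpos u).ne'
      simp only [arcDV, Prod.smul_snd, smul_eq_mul]
      field_simp)
  have E1 : (∫ u in (0:ℝ)..(2 * π), (arcDV c c u).1 ^ 2 * speed c u)
      + (∫ u in (0:ℝ)..(2 * π), (arcDV c c u).2 ^ 2 * speed c u)
      = ∫ u in (0:ℝ)..(2 * π), speed c u := by
    rw [← intervalIntegral.integral_add
      (Continuous.intervalIntegrable (u := fun u => (arcDV c c u).1 ^ 2 * speed c u)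
        ((hτ.fst.pow 2).mul hv) _ _)
      (Continuous.intervalIntegrable (u := fun u => (arcDV c c u).2 ^ 2 * speed c u)
        ((hτ.snd.pow 2).mul hv) _ _)]
    refine intervalIntegral.integral_congr fun u _ => ?_
    rw [← add_mul, arcDV_self_sq_add_sq hreg, one_mul]
  have hvne : ∀ u, speed c u ≠ 0 := fun u => (hvpos u).ne'
  have E2 : (∫ u in (0:ℝ)..(2 * π), ((speed c u * curvG c u) • nuG c u).1 ^ 2 / speed c u)
      + (∫ u in (0:ℝ)..(2 * π), ((speed c u * curvG c u) • nuG c u).2 ^ 2 / speed c u)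
      = ∫ u in (0:ℝ)..(2 * π), curvG c u ^ 2 * speed c u := by
    rw [← intervalIntegral.integral_add
      (Continuous.intervalIntegrable (by fun_prop (disch := exact hvne)) _ _)
      (Continuous.intervalIntegrable (by fun_prop (disch := exact hvne)) _ _)]
    refine intervalIntegral.integral_congr fun u _ => ?_
    have h0 := hvne u
    simp only [nuG_eq, Prod.smul_fst, Prod.smul_snd, smul_eq_mul]
    field_simp
    linear_combination curvG c u ^ 2 * arcDV_self_sq_add_sq hreg u
  have hQ := add_le_add W1 W2
  rw [← mul_add, ← mul_add, E1, E2] at hQ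
  have hL : 0 < ∫ u in (0:ℝ)..(2 * π), speed c u :=
    intervalIntegral.intervalIntegral_pos_of_pos (hv.intervalIntegrable _ _) hvpos ha
  set L := ∫ u in (0:ℝ)..(2 * π), speed c u
  set Q := ∫ u in (0:ℝ)..(2 * π), curvG c u ^ 2 * speed c u
  set R := ∫ u in (0:ℝ)..(2 * π), deriv (curvG c) u ^ 2 / speed c u
  have h1 : L * (16 * π ^ 4) ≤ L * (L ^ 3 * R) := by
    calc L * (16 * π ^ 4) = 4 * π ^ 2 * (4 * π ^ 2 * L) := by ring
      _ ≤ 4 * π ^ 2 * (L ^ 2 * Q) := by gcongr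
      _ = L ^ 2 * (4 * π ^ 2 * Q) := by ring
      _ ≤ L ^ 2 * (L ^ 2 * R) := by gcongr
      _ = L * (L ^ 3 * R) := by ring
  exact le_of_mul_le_mul_left h1 hL

/-- First variation of length under a velocity field with normal component `-κ_ss`. -/
theorem integral_innerP_deriv_eq (hc : ContDiff ℝ (⊤ : ℕ∞) c)
    (hper : Function.Periodic c (2 * π)) (hreg : ∀ u, deriv c u ≠ 0)
    {X X' : ℝ → ℝ × ℝ} (hX : ∀ u, HasDerivAt X (X' u) u) (hX' : Continuous X')
    (hXper : X (2 * π) = X 0) (hflow : ∀ u, innerP (X u) (nuG c u) = -curvGSS c u) :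
    ∫ u in (0:ℝ)..(2 * π), innerP (X' u) (arcDV c c u) =
      -∫ u in (0:ℝ)..(2 * π), deriv (curvG c) u ^ 2 / speed c u := by
  have hv := (contDiff_speed hc hreg).continuous
  have hK := contDiff_curvG hc hreg
  have hKS : ContDiff ℝ (⊤ : ℕ∞) (curvGS c) := contDiff_arcD hc hreg hK
  have hτ := (contDiff_arcDV hc hreg hc).continuous
  have hKd : ∀ u, HasDerivAt (curvG c) (deriv (curvG c) u) u := fun u =>
    (hK.differentiable (by simp) u).hasDerivAt
  have hKSd : ∀ u, HasDerivAt (curvGS c) (deriv (curvGS c) u) u := fun u =>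
    (hKS.differentiable (by simp) u).hasDerivAt
  have hFr := hasDerivAt_arcDV_self hc hreg
  set B : ℝ → ℝ := fun u => innerP (X u) (arcDV c c u) + curvG c u * curvGS c u with hB
  have hBd : ∀ u, HasDerivAt B (innerP (X' u) (arcDV c c u)
      + deriv (curvG c) u ^ 2 / speed c u) u := fun u => by
    have h := (((hX u).fst_real.mul (hFr u).fst_real).add
      ((hX u).snd_real.mul (hFr u).snd_real)).add ((hKd u).mul (hKSd u))
    refine h.congr_deriv ?_
    have h0 := (speed_pos hreg u).ne'
    have hf := hflow u
    simp only [curvGSS, arcD, innerP] at hf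
    have hf' : speed c u * ((X u).1 * (nuG c u).1 + (X u).2 * (nuG c u).2)
        = -deriv (curvGS c) u := by rw [hf]; field_simp
    simp only [innerP, curvGS, arcD, Prod.smul_fst, Prod.smul_snd, smul_eq_mul, div_eq_mul_inv]
      at hf' ⊢
    linear_combination curvG c u * hf'
  have hi1 : Continuous fun u => innerP (X' u) (arcDV c c u) :=
    (hX'.fst.mul hτ.fst).add (hX'.snd.mul hτ.snd)
  have hi2 : Continuous fun u => deriv (curvG c) u ^ 2 / speed c u :=
    ((contDiff_deriv hK).continuous.pow 2).div hv fun u => (speed_pos hreg u).ne'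
  have hint := intervalIntegral.integral_eq_sub_of_hasDerivAt (a := 0) (b := 2 * π)
    (fun u _ => hBd u) ((hi1.add hi2).intervalIntegrable _ _)
  have hBper : B (2 * π) = B 0 := by
    have h1 : arcDV c c (2 * π) = arcDV c c 0 := by simpa using periodic_arcDV hper hper 0
    have h2 : curvG c (2 * π) = curvG c 0 := by simpa using periodic_curvG hper 0
    have h3 : curvGS c (2 * π) = curvGS c 0 := by
      simpa [curvGS] using periodic_arcD hper (periodic_curvG hper) 0
    simp only [hB, h1, h2, h3, hXper]
  rw [hBper, sub_self, intervalIntegral.integral_add (hi1.intervalIntegrable _ _)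
    (hi2.intervalIntegrable _ _)] at hint
  linarith

end StaticCurve

theorem continuousOn_integral_slice {S : ℝ × ℝ → ℝ} {I : Set ℝ} (hI : IsCompact I)
    (hS : ContinuousOn S (Set.univ ×ˢ I)) (a b : ℝ) :
    ContinuousOn (fun t => ∫ u in a..b, S (u, t)) I := by
  have : CompactSpace I := isCompact_iff_compactSpace.1 hI
  rw [continuousOn_iff_continuous_domRestrict]
  refine intervalIntegral.continuous_parametric_intervalIntegral_of_continuous'
    (f := fun (t : I) u => S (u, t)) ?_ a b
  exact hS.comp_continuous (f := fun p : I × ℝ => (p.2, (p.1 : ℝ))) (by fun_prop)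
    fun p => ⟨trivial, p.1.2⟩

theorem isOpen_strip (T : ℝ) : IsOpen (Set.univ ×ˢ Set.Ioo 0 T : Set (ℝ × ℝ)) :=
  isOpen_univ.prod isOpen_Ioo

section Slices

variable {E : Type*} [NormedAddCommGroup E] [NormedSpace ℝ E]

theorem DifferentiableAt.hasDerivAt_slice_fst {G : ℝ × ℝ → E} {u t : ℝ}
    (hG : DifferentiableAt ℝ G (u, t)) :
    HasDerivAt (fun u' => G (u', t)) (fderiv ℝ G (u, t) (1, 0)) u :=
  hG.hasFDerivAt.comp_hasDerivAt (f := fun u' => (u', t)) u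
    ((hasDerivAt_id u).prodMk (hasDerivAt_const u t))

theorem DifferentiableAt.hasDerivAt_slice_snd {G : ℝ × ℝ → E} {u t : ℝ}
    (hG : DifferentiableAt ℝ G (u, t)) :
    HasDerivAt (fun t' => G (u, t')) (fderiv ℝ G (u, t) (0, 1)) t :=
  hG.hasFDerivAt.comp_hasDerivAt (f := fun t' => (u, t')) t
    ((hasDerivAt_const t u).prodMk (hasDerivAt_id t))

end Slices

theorem hasDerivAt_integral_slice {S : ℝ × ℝ → ℝ} {T t : ℝ}
    (hS : ContDiffOn ℝ 1 S (Set.univ ×ˢ Set.Ioo 0 T)) (ht : t ∈ Set.Ioo 0 T) (a b : ℝ) :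
    HasDerivAt (fun t' => ∫ u in a..b, S (u, t'))
      (∫ u in a..b, fderiv ℝ S (u, t) (0, 1)) t := by
  obtain ⟨t₁, h₁, h₁'⟩ := exists_between ht.1
  obtain ⟨t₂, h₂, h₂'⟩ := exists_between ht.2
  have hsub : Set.Icc t₁ t₂ ⊆ Set.Ioo 0 T := fun x hx => ⟨h₁.trans_le hx.1, hx.2.trans_lt h₂'⟩
  have hfc : ContinuousOn (fun p => fderiv ℝ S p (0, 1)) (Set.univ ×ˢ Set.Ioo 0 T) :=
    (hS.continuousOn_fderiv_of_isOpen (isOpen_strip T) le_rfl).clm_apply continuousOn_const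
  have hslice : ∀ x ∈ Set.Ioo 0 T, ∀ f : ℝ × ℝ → ℝ,
      ContinuousOn f (Set.univ ×ˢ Set.Ioo 0 T) → Continuous fun u => f (u, x) := fun x hx f hf =>
    hf.comp_continuous (f := fun u : ℝ => (u, x)) (by fun_prop) fun _ => ⟨trivial, hx⟩
  obtain ⟨C, hC⟩ := ((isCompact_uIcc (a := a) (b := b)).prod
    (isCompact_Icc (a := t₁) (b := t₂))).exists_bound_of_continuousOn
      (hfc.mono (Set.prod_mono (Set.subset_univ _) hsub))
  refine (intervalIntegral.hasDerivAt_integral_of_dominated_loc_of_deriv_le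
    (F := fun t' u => S (u, t')) (F' := fun t' u => fderiv ℝ S (u, t') (0, 1))
    (bound := fun _ => C) (Icc_mem_nhds h₁' h₂) ?_ ?_ ?_ ?_ (by simp) ?_).2
  · filter_upwards [Ioo_mem_nhds ht.1 ht.2] with x hx
    exact (hslice x hx S hS.continuousOn).aestronglyMeasurable
  · exact (hslice t ht S hS.continuousOn).intervalIntegrable _ _
  · exact (hslice t ht _ hfc).aestronglyMeasurable
  · exact Eventually.of_forall fun u hu x hx => hC (u, x) ⟨Set.uIoc_subset_uIcc hu, hx⟩
  · refine Eventually.of_forall fun u _ x hx => DifferentiableAt.hasDerivAt_slice_snd ?_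
    exact (hS.contDiffAt ((isOpen_strip T).mem_nhds ⟨trivial, hsub hx⟩)).differentiableAt
      one_ne_zero

theorem HasDerivAt.sqrt_sq_add_sq {F : ℝ → ℝ × ℝ} {F' : ℝ × ℝ} {t : ℝ} (hF : HasDerivAt F F' t)
    (h0 : F t ≠ 0) :
    HasDerivAt (fun x => √((F x).1 ^ 2 + (F x).2 ^ 2))
      (innerP F' ((√((F t).1 ^ 2 + (F t).2 ^ 2))⁻¹ • F t)) t := by
  have hpos := sq_add_sq_pos_of_ne_zero h0
  refine (((hF.fst_real.pow 2).add (hF.snd_real.pow 2)).sqrt hpos.ne').congr_deriv ?_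
  have := (Real.sqrt_pos.2 hpos).ne'
  simp only [innerP, Prod.smul_fst, Prod.smul_snd, smul_eq_mul, Pi.add_apply, Pi.pow_apply]
  field_simp
  push_cast
  ring

theorem two_le_infty : (2 : WithTop ℕ∞) ≤ ((⊤ : ℕ∞) : WithTop ℕ∞) :=
  WithTop.coe_le_coe.2 (le_top : (2 : ℕ∞) ≤ ⊤)

/-- First variation of the length of a smooth family of regular curves. -/
theorem hasDerivAt_clen {γ : ℝ → ℝ → ℝ × ℝ} {T t : ℝ}
    (hG : ContDiffOn ℝ (⊤ : ℕ∞) (fun p : ℝ × ℝ => γ p.1 p.2) (Set.univ ×ˢ Set.Ioo 0 T))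
    (hreg : ∀ u, ∀ t ∈ Set.Ioo (0:ℝ) T, deriv (fun u' => γ u' t) u ≠ 0) (ht : t ∈ Set.Ioo 0 T) :
    HasDerivAt (clen γ) (∫ u in (0:ℝ)..(2 * π),
      innerP (deriv (fun u' => deriv (fun t' => γ u' t') t) u)
        (arcDV (fun u' => γ u' t) (fun u' => γ u' t) u)) t := by
  set G : ℝ × ℝ → ℝ × ℝ := fun p => γ p.1 p.2 with hGdef
  have hat : ∀ u, ∀ t ∈ Set.Ioo 0 T, ContDiffAt ℝ (⊤ : ℕ∞) G (u, t) := fun u t ht =>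
    hG.contDiffAt ((isOpen_strip T).mem_nhds ⟨trivial, ht⟩)
  have hdu : ∀ u, ∀ t ∈ Set.Ioo 0 T,
      deriv (fun u' => γ u' t) u = fderiv ℝ G (u, t) (1, 0) := fun u t ht =>
    ((hat u t ht).differentiableAt (by simp)).hasDerivAt_slice_fst.deriv
  have hdt : ∀ u, ∀ t ∈ Set.Ioo 0 T,
      deriv (fun t' => γ u t') t = fderiv ℝ G (u, t) (0, 1) := fun u t ht =>
    ((hat u t ht).differentiableAt (by simp)).hasDerivAt_slice_snd.deriv
  have hfd : ContDiffOn ℝ 1 (fderiv ℝ G) (Set.univ ×ˢ Set.Ioo 0 T) :=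
    hG.fderiv_of_isOpen (isOpen_strip T) (one_add_one_eq_two.trans_le two_le_infty)
  have hA : ContDiffOn ℝ 1 (fun p => fderiv ℝ G p (1, 0)) (Set.univ ×ˢ Set.Ioo 0 T) :=
    hfd.clm_apply contDiffOn_const
  have hne : ∀ p ∈ (Set.univ ×ˢ Set.Ioo 0 T : Set (ℝ × ℝ)), fderiv ℝ G p (1, 0) ≠ 0 :=
    fun p hp => hdu p.1 p.2 hp.2 ▸ hreg p.1 p.2 hp.2
  set S : ℝ × ℝ → ℝ := fun p =>
    √((fderiv ℝ G p (1, 0)).1 ^ 2 + (fderiv ℝ G p (1, 0)).2 ^ 2) with hSdef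
  have hS : ContDiffOn ℝ 1 S (Set.univ ×ˢ Set.Ioo 0 T) :=
    ((hA.fst.pow 2).add (hA.snd.pow 2)).sqrt fun p hp => (sq_add_sq_pos_of_ne_zero (hne p hp)).ne'
  have hspeed : ∀ u, ∀ t ∈ Set.Ioo 0 T, speed (fun u' => γ u' t) u = S (u, t) :=
    fun u t ht => by simp only [speed, hdu u t ht, hSdef]
  have hder := hasDerivAt_integral_slice hS ht 0 (2 * π)
  have hval : ∀ u, fderiv ℝ S (u, t) (0, 1) =
      innerP (deriv (fun u' => deriv (fun t' => γ u' t') t) u)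
        (arcDV (fun u' => γ u' t) (fun u' => γ u' t) u) := fun u => by
    have hmem := (isOpen_strip T).mem_nhds (⟨trivial, ht⟩ : (u, t) ∈ Set.univ ×ˢ Set.Ioo 0 T)
    have hfdd : DifferentiableAt ℝ (fderiv ℝ G) (u, t) :=
      (hfd.contDiffAt hmem).differentiableAt one_ne_zero
    have hSd := ((hS.contDiffAt hmem).differentiableAt one_ne_zero).hasDerivAt_slice_snd
    have hAt : HasDerivAt (fun t' => fderiv ℝ G (u, t') (1, 0))
        (fderiv ℝ (fderiv ℝ G) (u, t) (0, 1) (1, 0)) t := by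
      simpa using hfdd.hasDerivAt_slice_snd.clm_apply (hasDerivAt_const t ((1:ℝ), (0:ℝ)))
    have hXu : HasDerivAt (fun u' => fderiv ℝ G (u', t) (0, 1))
        (fderiv ℝ (fderiv ℝ G) (u, t) (1, 0) (0, 1)) u := by
      simpa using hfdd.hasDerivAt_slice_fst.clm_apply (hasDerivAt_const u ((0:ℝ), (1:ℝ)))
    have hsymm := (hat u t ht).isSymmSndFDerivAt
      (by simpa using two_le_infty) (1, 0) (0, 1)
    rw [hSd.unique (hAt.sqrt_sq_add_sq (hne _ ⟨trivial, ht⟩)), ← hsymm, ← hXu.deriv, arcDV,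
      hspeed u t ht, hdu u t ht]
    simp only [hdt _ t ht, hSdef]
  simp only [hval] at hder
  refine hder.congr_of_eventuallyEq ?_
  filter_upwards [Ioo_mem_nhds ht.1 ht.2] with x hx
  simp only [clen, hspeed _ x hx]

theorem continuousOn_clen {γ : ℝ → ℝ → ℝ × ℝ} {T b : ℝ}
    (hsmooth : ContDiffOn ℝ (⊤ : ℕ∞) (fun p : ℝ × ℝ => γ p.1 p.2) (Set.univ ×ˢ Set.Ico 0 T))
    (hb : b < T) : ContinuousOn (clen γ) (Set.Icc 0 b) := by
  set G : ℝ × ℝ → ℝ × ℝ := fun p => γ p.1 p.2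
  set D : Set (ℝ × ℝ) := Set.univ ×ˢ Set.Ico 0 T
  have hsub : Set.Icc 0 b ⊆ Set.Ico 0 T := fun x hx => ⟨hx.1, hx.2.trans_lt hb⟩
  have hA : ContinuousOn (fun p => fderivWithin ℝ G D p (1, 0)) (Set.univ ×ˢ Set.Icc 0 b) :=
    ((hsmooth.continuousOn_fderivWithin (uniqueDiffOn_univ.prod (uniqueDiffOn_Ico 0 T))
      (by simp)).clm_apply continuousOn_const).mono (Set.prod_mono subset_rfl hsub)
  refine (continuousOn_integral_slice isCompact_Icc
    ((hA.fst.pow 2).add (hA.snd.pow 2)).sqrt 0 (2 * π)).congr fun t ht => ?_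
  refine intervalIntegral.integral_congr fun u _ => ?_
  have hd : HasDerivAt (fun u' => γ u' t) (fderivWithin ℝ G D (u, t) (1, 0)) u :=
    (hsmooth.differentiableOn (by simp) (u, t) ⟨trivial, hsub ht⟩).hasFDerivWithinAt.comp_hasDerivAt
      (f := fun u' => (u', t)) u ((hasDerivAt_id u).prodMk (hasDerivAt_const u t))
      (Eventually.of_forall fun _ => ⟨trivial, hsub ht⟩)
  simp only [speed, hd.deriv]
  rfl

theorem clen_deriv_bound {γ : ℝ → ℝ → ℝ × ℝ} {T t : ℝ}
    (hG : ContDiffOn ℝ (⊤ : ℕ∞) (fun p : ℝ × ℝ => γ p.1 p.2) (Set.univ ×ˢ Set.Ioo 0 T))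
    (hper : ∀ u, ∀ t ∈ Set.Ioo (0:ℝ) T, γ (u + 2 * π) t = γ u t)
    (hreg : ∀ u, ∀ t ∈ Set.Ioo (0:ℝ) T, deriv (fun u' => γ u' t) u ≠ 0)
    (hflow : ∀ u, ∀ t ∈ Set.Ioo (0:ℝ) T,
      innerP (deriv (fun t' => γ u t') t) (nuG (fun u' => γ u' t) u)
        = - curvGSS (fun u' => γ u' t) u)
    (hwind : ∀ t ∈ Set.Ioo (0:ℝ) T,
      ∫ u in (0:ℝ)..(2 * π), curvG (fun u' => γ u' t) u * speed (fun u' => γ u' t) u = 0)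
    (ht : t ∈ Set.Ioo 0 T) :
    ∃ L', HasDerivAt (clen γ) L' t ∧ clen γ t ^ 3 * L' ≤ -(16 * π ^ 4) := by
  refine ⟨_, hasDerivAt_clen hG hreg ht, ?_⟩
  have hat : ∀ u, ContDiffAt ℝ (⊤ : ℕ∞) (fun p : ℝ × ℝ => γ p.1 p.2) (u, t) := fun u =>
    hG.contDiffAt ((isOpen_strip T).mem_nhds ⟨trivial, ht⟩)
  have hline : ContDiff ℝ (⊤ : ℕ∞) fun u : ℝ => (u, t) := contDiff_id.prodMk contDiff_const
  have hc : ContDiff ℝ (⊤ : ℕ∞) fun u => γ u t := contDiff_iff_contDiffAt.2 fun u =>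
    (hat u).comp (f := fun u : ℝ => (u, t)) u hline.contDiffAt
  have hX : ContDiff ℝ (⊤ : ℕ∞) fun u => deriv (fun t' => γ u t') t := by
    have : ContDiff ℝ (⊤ : ℕ∞) fun u =>
        fderiv ℝ (fun p : ℝ × ℝ => γ p.1 p.2) (u, t) (0, 1) :=
      contDiff_iff_contDiffAt.2 fun u =>
        (((hat u).fderiv_right (m := (⊤ : ℕ∞)) (by simp)).comp (f := fun u : ℝ => (u, t)) u
          hline.contDiffAt).clm_apply contDiffAt_const
    convert this using 2 with u
    exact ((hat u).differentiableAt (by simp)).hasDerivAt_slice_snd.deriv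
  have hXper : deriv (fun t' => γ (2 * π) t') t = deriv (fun t' => γ 0 t') t := by
    refine Filter.EventuallyEq.deriv_eq ?_
    filter_upwards [Ioo_mem_nhds ht.1 ht.2] with x hx
    simpa using hper 0 x hx
  rw [integral_innerP_deriv_eq hc (fun u => hper u t ht) (fun u => hreg u t ht)
    (fun u => (hX.differentiable (by simp) u).hasDerivAt) (contDiff_deriv hX).continuous hXper
    (fun u => hflow u t ht), mul_neg]
  exact neg_le_neg (length_cube_mul_integral_ge hc (fun u => hper u t ht) (fun u => hreg u t ht)
    (hwind t ht))

/-- Escher–Ito–Polden bound: a curve diffusion flow of closed curves whose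
curves all have winding number zero satisfies `T ≤ L(0)⁴ / (64 π⁴)`. -/
theorem curve_diffusion_maximal_time_bound
    (T : ℝ) (hT : 0 < T) (γ : ℝ → ℝ → ℝ × ℝ)
    (hsmooth : ContDiffOn ℝ (⊤ : ℕ∞) (fun p : ℝ × ℝ => γ p.1 p.2) (Set.univ ×ˢ Set.Ico 0 T))
    (hper : ∀ u : ℝ, ∀ t ∈ Set.Ico (0:ℝ) T, γ (u + 2 * Real.pi) t = γ u t)
    (hreg : ∀ u : ℝ, ∀ t ∈ Set.Ico (0:ℝ) T, deriv (fun u' => γ u' t) u ≠ 0)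
    (hflow : ∀ u : ℝ, ∀ t ∈ Set.Ico (0:ℝ) T,
      innerP (deriv (fun t' => γ u t') t) (nuG (fun u' => γ u' t) u)
        = - curvGSS (fun u' => γ u' t) u)
    (hwind : ∀ t ∈ Set.Ico (0:ℝ) T,
      ∫ u in (0:ℝ)..(2 * Real.pi), curvG (fun u' => γ u' t) u * speed (fun u' => γ u' t) u = 0) :
    T ≤ (clen γ 0) ^ 4 / (64 * Real.pi ^ 4) := by
  have hsub : Set.Ioo 0 T ⊆ Set.Ico 0 T := Set.Ioo_subset_Ico_self
  have hder : ∀ t ∈ Set.Ioo 0 T,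
      ∃ L', HasDerivAt (clen γ) L' t ∧ clen γ t ^ 3 * L' ≤ -(16 * π ^ 4) := fun t ht =>
    clen_deriv_bound (hsmooth.mono (Set.prod_mono subset_rfl hsub))
      (fun u t ht => hper u t (hsub ht)) (fun u t ht => hreg u t (hsub ht))
      (fun u t ht => hflow u t (hsub ht)) (fun t ht => hwind t (hsub ht)) ht
  refine le_of_forall_lt_imp_le_of_dense fun b hb => ?_
  rcases le_or_gt b 0 with hb0 | hb0
  · exact hb0.trans (by positivity)
  have hφ : ∀ t ∈ Set.Ioo 0 b, ∃ d ≤ 0,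
      HasDerivAt (fun t => clen γ t ^ 4 + 64 * π ^ 4 * t) d t := fun t ht => by
    obtain ⟨L', hL', hle⟩ := hder t ⟨ht.1, ht.2.trans hb⟩
    refine ⟨_, ?_, (hL'.pow 4).add ((hasDerivAt_id t).const_mul (64 * π ^ 4))⟩
    push_cast
    linarith
  have hanti : AntitoneOn (fun t => clen γ t ^ 4 + 64 * π ^ 4 * t) (Set.Icc 0 b) := by
    refine antitoneOn_of_deriv_nonpos (convex_Icc 0 b)
      (((continuousOn_clen hsmooth hb).pow 4).add (by fun_prop)) ?_ ?_ <;>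
    rw [interior_Icc] <;> intro t ht <;> obtain ⟨d, hd, hdd⟩ := hφ t ht
    · exact hdd.differentiableAt.differentiableWithinAt
    · rwa [hdd.deriv]
  have h := hanti (Set.left_mem_Icc.2 hb0.le) (Set.right_mem_Icc.2 hb0.le) hb0.le
  have h4 : 0 ≤ clen γ b ^ 4 := by positivity
  rw [le_div_iff₀ (by positivity)]
  simp only [mul_zero, add_zero] at h
  linarith
end

section
/- Let γ : ℝ → ℝ² be a smooth closed regular plane curve parametrised by arc length with period L > 0, with curvature κ. Then ∫₀^L |κ(s)| ds ≥ 2π. -/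
open Real MeasureTheory Filter

/-- Unit normal `ν = (y', -x')` of a plane curve parametrised by arc length. -/
noncomputable def nuA (γ : ℝ → ℝ × ℝ) (s : ℝ) : ℝ × ℝ :=
  ((deriv γ s).2, -(deriv γ s).1)

/-- Curvature `κ = ⟨γ'', ν⟩` of a plane curve parametrised by arc length. -/
noncomputable def curvA (γ : ℝ → ℝ × ℝ) (s : ℝ) : ℝ :=
  innerP (deriv (deriv γ) s) (nuA γ s)

/-- A `C¹` unit vector field `(a, b)` along the line with `a' = k b` and `b' = -k a` has an angle
function with derivative `-k`. -/
lemma exists_angle_lift {a b k : ℝ → ℝ} (hk : Continuous k)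
    (ha : ∀ s, HasDerivAt a (k s * b s) s) (hb : ∀ s, HasDerivAt b (-(k s * a s)) s)
    (hab : ∀ s, a s ^ 2 + b s ^ 2 = 1) :
    ∃ θ : ℝ → ℝ, (∀ s, HasDerivAt θ (-k s) s) ∧ ∀ s, a s = cos (θ s) ∧ b s = sin (θ s) := by
  obtain ⟨θ₀, hc₀, hs₀⟩ : ∃ θ₀, a 0 = cos θ₀ ∧ b 0 = sin θ₀ := by
    have hnorm : ‖(⟨a 0, b 0⟩ : ℂ)‖ = 1 := by
      rw [Complex.norm_def, Complex.normSq_mk, ← sq, ← sq, hab 0, sqrt_one]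
    have hne : (⟨a 0, b 0⟩ : ℂ) ≠ 0 := norm_ne_zero_iff.1 (by simp [hnorm])
    refine ⟨Complex.arg ⟨a 0, b 0⟩, ?_, ?_⟩
    · rw [Complex.cos_arg hne, hnorm, div_one]
    · rw [Complex.sin_arg, hnorm, div_one]
  let θ : ℝ → ℝ := fun s => θ₀ - ∫ t in (0 : ℝ)..s, k t
  have hθ : ∀ s, HasDerivAt θ (-k s) s := fun s =>
    (hk.integral_hasStrictDerivAt 0 s).hasDerivAt.const_sub θ₀
  have hθ0 : θ 0 = θ₀ := by simp [θ]
  let u : ℝ → ℝ := fun s => a s * cos (θ s) + b s * sin (θ s)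
  have hu : ∀ s, HasDerivAt u 0 s := fun s => by
    refine (((ha s).mul (hθ s).cos).add ((hb s).mul (hθ s).sin)).congr_deriv ?_
    ring
  have hu1 : ∀ s, u s = 1 := fun s => by
    rw [is_const_of_deriv_eq_zero (fun t => (hu t).differentiableAt) (fun t => (hu t).deriv) s 0]
    simp only [u, hθ0, ← hc₀, ← hs₀]
    linarith [hab 0]
  refine ⟨θ, hθ, fun s => ?_⟩
  have hsum : (a s - cos (θ s)) ^ 2 + (b s - sin (θ s)) ^ 2 = 0 := by
    have h1 : a s * cos (θ s) + b s * sin (θ s) = 1 := hu1 s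
    linear_combination hab s + sin_sq_add_cos_sq (θ s) - 2 * h1
  constructor
  · nlinarith [sq_nonneg (a s - cos (θ s)), sq_nonneg (b s - sin (θ s))]
  · nlinarith [sq_nonneg (a s - cos (θ s)), sq_nonneg (b s - sin (θ s))]

/-- The variation of a `C¹` function between two points is at most the integral of the absolute
value of its derivative. -/
lemma abs_sub_le_integral_abs_deriv {f f' : ℝ → ℝ} (hf : ∀ s, HasDerivAt f (f' s) s)
    (hf' : Continuous f') {x y : ℝ} (hxy : x ≤ y) :
    |f y - f x| ≤ ∫ s in x..y, |f' s| := by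
  rw [← intervalIntegral.integral_eq_sub_of_hasDerivAt (fun s _ => hf s)
    (hf'.intervalIntegrable x y)]
  exact intervalIntegral.abs_integral_le_integral_abs hxy

/-- A `C¹` function with equal values at the ends of an interval has total variation at least
twice its oscillation. -/
lemma two_mul_abs_sub_le_integral_abs_deriv {f f' : ℝ → ℝ} (hf : ∀ s, HasDerivAt f (f' s) s)
    (hf' : Continuous f') {x y p q : ℝ} (hxy : f x = f y) (hxp : x ≤ p) (hpq : p ≤ q)
    (hqy : q ≤ y) :
    2 * |f q - f p| ≤ ∫ s in x..y, |f' s| := by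
  have hint : ∀ c d, IntervalIntegrable (fun s => |f' s|) volume c d := fun c d =>
    hf'.abs.intervalIntegrable c d
  rw [← intervalIntegral.integral_add_adjacent_intervals (hint x p) (hint p y),
    ← intervalIntegral.integral_add_adjacent_intervals (hint p q) (hint q y)]
  have h₁ := abs_sub_le_integral_abs_deriv hf hf' hxp
  have h₂ := abs_sub_le_integral_abs_deriv hf hf' hpq
  have h₃ := abs_sub_le_integral_abs_deriv hf hf' hqy
  have h₄ : |f q - f p| ≤ |f p - f x| + |f y - f q| := by
    rw [abs_sub_comm (f q), show f p - f q = (f p - f x) + (f y - f q) by rw [hxy]; ring]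
    exact abs_add_le _ _
  linarith

/-- If both `cos ∘ θ` and `sin ∘ θ` integrate to zero over a nontrivial interval, then `θ`
oscillates by at least `π` on it. -/
lemma exists_pi_le_sub_of_integral_cos_sin_eq_zero {θ : ℝ → ℝ} (hθ : Continuous θ) {x y : ℝ}
    (hxy : x < y) (hc : ∫ s in x..y, cos (θ s) = 0) (hs : ∫ s in x..y, sin (θ s) = 0) :
    ∃ p ∈ Set.Icc x y, ∃ q ∈ Set.Icc x y, π ≤ θ q - θ p := by
  obtain ⟨p, hp, hpmin⟩ := isCompact_Icc.exists_isMinOn (Set.nonempty_Icc.2 hxy.le)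
    hθ.continuousOn
  obtain ⟨q, hq, hqmax⟩ := isCompact_Icc.exists_isMaxOn (Set.nonempty_Icc.2 hxy.le)
    hθ.continuousOn
  refine ⟨p, hp, q, hq, ?_⟩
  by_contra! hlt
  set c := (θ p + θ q) / 2 with hcdef
  have hpos : 0 < ∫ s in x..y, cos (θ s - c) := by
    refine intervalIntegral.intervalIntegral_pos_of_pos_on
      (Continuous.intervalIntegrable (by fun_prop) _ _) (fun s hs' => ?_) hxy
    have h₁ : θ p ≤ θ s := hpmin (Set.Ioo_subset_Icc_self hs')
    have h₂ : θ s ≤ θ q := hqmax (Set.Ioo_subset_Icc_self hs')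
    exact cos_pos_of_mem_Ioo ⟨by linarith, by linarith⟩
  have hzero : ∫ s in x..y, cos (θ s - c) = 0 := by
    simp only [cos_sub]
    rw [intervalIntegral.integral_add (Continuous.intervalIntegrable (by fun_prop) _ _)
      (Continuous.intervalIntegrable (by fun_prop) _ _), intervalIntegral.integral_mul_const,
      intervalIntegral.integral_mul_const, hc, hs]
    ring
  exact hpos.ne' hzero

/-- Fenchel-type inequality for plane curves: a smooth closed regular plane
curve parametrised by arc length with period `L > 0` satisfies `∫₀^L |κ| ds ≥ 2π`. -/
theorem total_absolute_curvature_ge_two_pi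
    (γ : ℝ → ℝ × ℝ) (L : ℝ) (hL : 0 < L)
    (hsmooth : ContDiff ℝ (⊤ : ℕ∞) γ)
    (hunit : ∀ s, (deriv γ s).1 ^ 2 + (deriv γ s).2 ^ 2 = 1)
    (hper : ∀ s, γ (s + L) = γ s) :
    2 * Real.pi ≤ ∫ s in (0:ℝ)..L, |curvA γ s| := by
  have hsmooth' : ContDiff ℝ (⊤ : ℕ∞) (deriv γ) := (contDiff_infty_iff_deriv.1 hsmooth).2
  have hsmooth'' : ContDiff ℝ (⊤ : ℕ∞) (deriv (deriv γ)) :=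
    (contDiff_infty_iff_deriv.1 hsmooth').2
  have hcont' := hsmooth'.continuous
  have hcont'' := hsmooth''.continuous
  have hκ : Continuous (curvA γ) := by
    unfold curvA innerP nuA
    fun_prop
  have hγ : ∀ s, HasDerivAt γ (deriv γ s) s := fun s =>
    (hsmooth.differentiable (by simp) s).hasDerivAt
  have hγ' : ∀ s, HasDerivAt (deriv γ) (deriv (deriv γ) s) s := fun s =>
    (hsmooth'.differentiable (by simp) s).hasDerivAt
  have hx : ∀ s, HasDerivAt (fun t => (deriv γ t).1) (deriv (deriv γ) s).1 s := fun s =>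
    (hγ' s).fst
  have hy : ∀ s, HasDerivAt (fun t => (deriv γ t).2) (deriv (deriv γ) s).2 s := fun s =>
    (hγ' s).snd
  have horth : ∀ s, (deriv γ s).1 * (deriv (deriv γ) s).1
      + (deriv γ s).2 * (deriv (deriv γ) s).2 = 0 := fun s => by
    have h := ((hx s).pow 2).add ((hy s).pow 2)
    have h0 := h.unique ((hasDerivAt_const s (1 : ℝ)).congr_of_eventuallyEq
      (Eventually.of_forall hunit))
    norm_num at h0
    linarith
  obtain ⟨θ, hθ, hT⟩ := exists_angle_lift (a := fun s => (deriv γ s).1)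
    (b := fun s => (deriv γ s).2) hκ
    (fun s => (hx s).congr_deriv <| by
      simp only [curvA, innerP, nuA]
      linear_combination (-(deriv (deriv γ) s).1) * hunit s + (deriv γ s).1 * horth s)
    (fun s => (hy s).congr_deriv <| by
      simp only [curvA, innerP, nuA]
      linear_combination (-(deriv (deriv γ) s).2) * hunit s + (deriv γ s).2 * horth s)
    hunit
  have hθc : Continuous θ := continuous_iff_continuousAt.2 fun s => (hθ s).continuousAt
  have hγL : γ L = γ 0 := by simpa using hper 0
  have hcos : ∫ s in (0 : ℝ)..L, cos (θ s) = 0 := by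
    simp only [← (hT _).1]
    rw [intervalIntegral.integral_eq_sub_of_hasDerivAt (fun s _ => (hγ s).fst)
      (Continuous.intervalIntegrable (by fun_prop) _ _), hγL, sub_self]
  have hsin : ∫ s in (0 : ℝ)..L, sin (θ s) = 0 := by
    simp only [← (hT _).2]
    rw [intervalIntegral.integral_eq_sub_of_hasDerivAt (fun s _ => (hγ s).snd)
      (Continuous.intervalIntegrable (by fun_prop) _ _), hγL, sub_self]
  have hTL : deriv γ L = deriv γ 0 := by
    have h := deriv_comp_add_const γ L 0
    rw [funext hper, zero_add] at h
    exact h.symm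
  have hturn : cos (θ L - θ 0) = 1 := by
    rw [cos_sub, ← (hT L).1, ← (hT L).2, ← (hT 0).1, ← (hT 0).2, hTL]
    linarith [hunit 0]
  simp only [← abs_neg (curvA γ _)]
  obtain ⟨n, hn⟩ := (cos_eq_one_iff _).1 hturn
  rcases eq_or_ne n 0 with rfl | hn0
  · have hends : θ 0 = θ L := by
      rw [Int.cast_zero, zero_mul] at hn
      linarith
    obtain ⟨p, hp, q, hq, hpq⟩ :=
      exists_pi_le_sub_of_integral_cos_sin_eq_zero hθc hL hcos hsin
    rcases le_total p q with h | h
    · linarith [two_mul_abs_sub_le_integral_abs_deriv hθ hκ.neg hends hp.1 h hq.2,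
        le_abs_self (θ q - θ p)]
    · linarith [two_mul_abs_sub_le_integral_abs_deriv hθ hκ.neg hends hq.1 h hp.2,
        neg_abs_le (θ p - θ q)]
  · refine le_trans ?_ (abs_sub_le_integral_abs_deriv hθ hκ.neg hL.le)
    rw [← hn, abs_mul, abs_of_pos two_pi_pos]
    have h1 : (1 : ℝ) ≤ |(n : ℝ)| := by exact_mod_cast Int.one_le_abs hn0
    exact le_mul_of_one_le_left two_pi_pos.le h1
end

section
/- Let γ : ℝ → ℝ² be a smooth closed regular plane curve parametrised by arc length with period L > 0, with curvature κ, and suppose κ''(s) = 0 for all s ∈ ℝ (γ is a stationary solution of the curve diffusion flow). Then γ is a round circle: there exist a point c ∈ ℝ² and a radius R > 0 such that ‖γ(s) − c‖ = R for all s ∈ ℝ. -/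
open Real MeasureTheory Filter

/-- A differentiable periodic function with vanishing second derivative is constant. -/
theorem eq_const_of_periodic_of_deriv_deriv_eq_zero {f : ℝ → ℝ} {L : ℝ} (hL : L ≠ 0)
    (hf : Differentiable ℝ f) (hf' : Differentiable ℝ (deriv f))
    (hper : ∀ s, f (s + L) = f s) (h : ∀ s, deriv (deriv f) s = 0) (s : ℝ) :
    f s = f 0 := by
  have hslope : ∀ t, deriv f t = deriv f 0 := fun t => is_const_of_deriv_eq_zero hf' h t 0
  have hderiv : ∀ t, HasDerivAt (fun u => f u - deriv f 0 * u) 0 t := fun t => by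
    have := (hf t).hasDerivAt.sub ((hasDerivAt_id t).const_mul (deriv f 0))
    rw [hslope t, mul_one, sub_self] at this
    exact this
  have hconst : ∀ t, f t - deriv f 0 * t = f 0 - deriv f 0 * 0 := fun t =>
    is_const_of_deriv_eq_zero (fun u => (hderiv u).differentiableAt)
      (fun u => (hderiv u).deriv) t 0
  have hzero : deriv f 0 = 0 := by
    have h₁ := hconst L
    have h₂ := hper 0
    rw [zero_add] at h₂
    have h₃ : deriv f 0 * L = 0 := by linarith
    exact (mul_eq_zero.mp h₃).resolve_right hL
  simpa [hzero] using hconst s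

/-- The Frenet equations for a unit vector field `(p, q)` along a curve of curvature `k`. -/
theorem frenet_of_unit {p q p' q' k : ℝ} (hunit : p ^ 2 + q ^ 2 = 1)
    (horth : p * p' + q * q' = 0) (hk : p' * q - q' * p = k) :
    p' = k * q ∧ q' = -(k * p) := by
  constructor
  · linear_combination (-p') * hunit + p * horth + q * hk
  · linear_combination (-q') * hunit + q * horth - p * hk

/-- A smooth plane curve has smooth curvature. -/
theorem contDiff_curvA {γ : ℝ → ℝ × ℝ} (hγ : ContDiff ℝ (⊤ : ℕ∞) γ) :
    ContDiff ℝ (⊤ : ℕ∞) (curvA γ) := by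
  have h₁ : ContDiff ℝ (⊤ : ℕ∞) (deriv γ) := (contDiff_infty_iff_deriv.mp hγ).2
  have h₂ : ContDiff ℝ (⊤ : ℕ∞) (deriv (deriv γ)) := (contDiff_infty_iff_deriv.mp h₁).2
  exact (h₂.fst.mul h₁.snd).add (h₂.snd.mul h₁.fst.neg)

/-- The curvature of a periodic plane curve is periodic. -/
theorem curvA_add_period {γ : ℝ → ℝ × ℝ} {L : ℝ} (hper : ∀ s, γ (s + L) = γ s) (s : ℝ) :
    curvA γ (s + L) = curvA γ s := by
  have h₁ : ∀ t, deriv γ (t + L) = deriv γ t := fun t => by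
    rw [← deriv_comp_add_const, funext hper]
  have h₂ : ∀ t, deriv (deriv γ) (t + L) = deriv (deriv γ) t := fun t => by
    rw [← deriv_comp_add_const, funext h₁]
  simp only [curvA, nuA, h₁, h₂]

/-- a closed stationary solution of the curve diffusion flow (`κ'' ≡ 0`)
is a round circle. -/
theorem closed_stationary_is_circle
    (γ : ℝ → ℝ × ℝ) (L : ℝ) (hL : 0 < L)
    (hsmooth : ContDiff ℝ (⊤ : ℕ∞) γ)
    (hunit : ∀ s, (deriv γ s).1 ^ 2 + (deriv γ s).2 ^ 2 = 1)
    (hper : ∀ s, γ (s + L) = γ s)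
    (hstat : ∀ s, deriv (deriv (curvA γ)) s = 0) :
    ∃ c : ℝ × ℝ, ∃ R : ℝ, 0 < R ∧
      ∀ s, Real.sqrt (((γ s).1 - c.1) ^ 2 + ((γ s).2 - c.2) ^ 2) = R := by
  have hγ' : ContDiff ℝ (⊤ : ℕ∞) (deriv γ) := (contDiff_infty_iff_deriv.mp hsmooth).2
  have hκ := contDiff_curvA hsmooth
  have hk : ∀ s, curvA γ s = curvA γ 0 :=
    eq_const_of_periodic_of_deriv_deriv_eq_zero hL.ne' (hκ.differentiable (by simp))
      ((contDiff_infty_iff_deriv.mp hκ).2.differentiable (by simp))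
      (curvA_add_period hper) hstat
  set k := curvA γ 0
  have hdγ : ∀ s, HasDerivAt γ (deriv γ s) s := fun s =>
    (hsmooth.differentiable (by simp) s).hasDerivAt
  have hdT : ∀ s, HasDerivAt (deriv γ) (deriv (deriv γ) s) s := fun s =>
    (hγ'.differentiable (by simp) s).hasDerivAt
  have hx : ∀ s, HasDerivAt (fun t => (γ t).1) (deriv γ s).1 s := fun s => (hdγ s).fst
  have hy : ∀ s, HasDerivAt (fun t => (γ t).2) (deriv γ s).2 s := fun s => (hdγ s).snd
  have hp : ∀ s, HasDerivAt (fun t => (deriv γ t).1) (deriv (deriv γ) s).1 s :=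
    fun s => (hdT s).fst
  have hq : ∀ s, HasDerivAt (fun t => (deriv γ t).2) (deriv (deriv γ) s).2 s :=
    fun s => (hdT s).snd
  have hfrenet : ∀ s, (deriv (deriv γ) s).1 = k * (deriv γ s).2 ∧
      (deriv (deriv γ) s).2 = -(k * (deriv γ s).1) := fun s => by
    refine frenet_of_unit (hunit s) ?_ ?_
    · have h₁ := ((hp s).pow 2).add ((hq s).pow 2)
      have h₂ := h₁.unique
        ((hasDerivAt_const s (1 : ℝ)).congr_of_eventuallyEq (Eventually.of_forall hunit))
      norm_num at h₂
      linarith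
    · rw [← hk s]
      simp only [curvA, innerP, nuA]
      ring
  have const_of_hasDerivAt : ∀ f : ℝ → ℝ, (∀ s, HasDerivAt f 0 s) → ∀ s, f s = f 0 :=
    fun f hf s => is_const_of_deriv_eq_zero (fun u => (hf u).differentiableAt)
      (fun u => (hf u).deriv) s 0
  have hcx := const_of_hasDerivAt (fun t => k * (γ t).1 + (deriv γ t).2) fun s => by
    have h := ((hx s).const_mul k).add (hq s)
    rw [(hfrenet s).2, add_neg_cancel] at h
    exact h
  have hcy := const_of_hasDerivAt (fun t => k * (γ t).2 - (deriv γ t).1) fun s => by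
    have h := ((hy s).const_mul k).sub (hp s)
    rw [(hfrenet s).1, sub_self] at h
    exact h
  beta_reduce at hcx hcy
  rcases eq_or_ne k 0 with hk0 | hk0
  · simp only [hk0, zero_mul, zero_add, zero_sub, neg_inj] at hcx hcy
    have hlx := const_of_hasDerivAt (fun t => (γ t).1 - (deriv γ 0).1 * t) fun s => by
      have h := (hx s).sub ((hasDerivAt_id s).const_mul (deriv γ 0).1)
      rw [hcy s, mul_one, sub_self] at h
      exact h
    have hly := const_of_hasDerivAt (fun t => (γ t).2 - (deriv γ 0).2 * t) fun s => by
      have h := (hy s).sub ((hasDerivAt_id s).const_mul (deriv γ 0).2)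
      rw [hcx s, mul_one, sub_self] at h
      exact h
    have hγL : γ L = γ 0 := by simpa using hper 0
    have hx0 : (deriv γ 0).1 = 0 := by simpa [hγL, hL.ne'] using hlx L
    have hy0 : (deriv γ 0).2 = 0 := by simpa [hγL, hL.ne'] using hly L
    have h := hunit 0
    norm_num [hx0, hy0] at h
  · refine ⟨((γ 0).1 + (deriv γ 0).2 / k, (γ 0).2 - (deriv γ 0).1 / k), |k⁻¹|,
      abs_pos.mpr (inv_ne_zero hk0), fun s => ?_⟩
    rw [← Real.sqrt_sq_eq_abs]
    congr 1
    have h₁ : (γ s).1 - ((γ 0).1 + (deriv γ 0).2 / k) = -(deriv γ s).2 / k := by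
      field_simp
      linarith [hcx s]
    have h₂ : (γ s).2 - ((γ 0).2 - (deriv γ 0).1 / k) = (deriv γ s).1 / k := by
      field_simp
      linarith [hcy s]
    simp only [h₁, h₂]
    field_simp
    linarith [hunit s]
end

section
/- Let γ : ℝ → ℝ² be a smooth regular plane curve parametrised by arc length that is proper (the preimage of every compact subset of ℝ² is compact), and suppose its curvature satisfies κ''(s) = 0 for all s ∈ ℝ. Then γ is a straight line: γ(s) = γ(0) + s γ'(0) for all s ∈ ℝ. -/
open Real MeasureTheory Filter

/-- If `x' = u`, `v' = -κ u` with `v` bounded by one and `κ(t) = a t + b` nondecreasing and positive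
at `S`, then `x` is bounded above on `[S, ∞)`. -/
lemma le_add_two_div_of_affine_curvature {x u v : ℝ → ℝ} {a b S : ℝ}
    (hx : ∀ t, HasDerivAt x (u t) t) (hv : ∀ t, HasDerivAt v (-((a * t + b) * u t)) t)
    (hbound : ∀ t, |v t| ≤ 1) (ha : 0 ≤ a) (hS : 0 < a * S + b) {t : ℝ} (ht : S ≤ t) :
    x t ≤ x S + 2 / (a * S + b) := by
  have hpos : ∀ r, S ≤ r → 0 < a * r + b := fun r hr => by nlinarith
  have hderiv : ∀ r, S ≤ r → HasDerivAt (fun r => x r + (v r + 1) / (a * r + b))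
      (-(a * (v r + 1) / (a * r + b) ^ 2)) r := fun r hr => by
    have hκ : HasDerivAt (fun r => a * r + b) a r := by
      simpa using ((hasDerivAt_id r).const_mul a).add_const b
    have hne := (hpos r hr).ne'
    refine ((hx r).add (((hv r).add_const 1).div hκ hne)).congr_deriv ?_
    field_simp
    ring
  have hanti : AntitoneOn (fun r => x r + (v r + 1) / (a * r + b)) (Set.Ici S) := by
    refine antitoneOn_of_hasDerivWithinAt_nonpos (convex_Ici S)
      (fun r hr => (hderiv r hr).continuousAt.continuousWithinAt)
      (fun r hr => (hderiv r (interior_subset hr)).hasDerivWithinAt) fun r _ => ?_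
    have := (abs_le.1 (hbound r)).1
    have : 0 ≤ v r + 1 := by linarith
    exact neg_nonpos.2 (by positivity)
  have hle := hanti Set.self_mem_Ici ht ht
  have hterm : 0 ≤ (v t + 1) / (a * t + b) :=
    div_nonneg (by linarith [(abs_le.1 (hbound t)).1]) (hpos t ht).le
  have hinit : (v S + 1) / (a * S + b) ≤ 2 / (a * S + b) := by
    gcongr
    linarith [(abs_le.1 (hbound S)).2]
  simp only at hle
  linarith

lemma abs_sub_le_two_div_of_affine_curvature {x u v : ℝ → ℝ} {a b S : ℝ}
    (hx : ∀ t, HasDerivAt x (u t) t) (hv : ∀ t, HasDerivAt v (-((a * t + b) * u t)) t)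
    (hbound : ∀ t, |v t| ≤ 1) (ha : 0 ≤ a) (hS : 0 < a * S + b) {t : ℝ} (ht : S ≤ t) :
    |x t - x S| ≤ 2 / (a * S + b) := by
  have hupper := le_add_two_div_of_affine_curvature hx hv hbound ha hS ht
  have hlower := le_add_two_div_of_affine_curvature (x := fun r => -x r) (u := fun r => -u r)
    (v := fun r => -v r) (fun r => (hx r).neg)
    (fun r => (hv r).neg.congr_deriv (by ring)) (fun r => by simpa using hbound r) ha hS ht
  exact abs_le.2 ⟨by linarith, by linarith⟩

/-- A unit-speed curve with curvature `σ (a t + b)`, where `σ = ±1`, `0 ≤ a` and `a t + b` is positive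
at some `S`, is not proper. -/
lemma not_proper_of_affine_curvature {γ : ℝ → ℝ × ℝ} {u v : ℝ → ℝ} {a b S : ℝ}
    (hx : ∀ t, HasDerivAt (fun r => (γ r).1) (u t) t)
    (hy : ∀ t, HasDerivAt (fun r => (γ r).2) (v t) t)
    {σ : ℝ} (hσ : |σ| = 1)
    (hu : ∀ t, HasDerivAt u (σ * ((a * t + b) * v t)) t)
    (hv : ∀ t, HasDerivAt v (-(σ * ((a * t + b) * u t))) t)
    (hunit : ∀ t, u t ^ 2 + v t ^ 2 = 1) (ha : 0 ≤ a) (hS : 0 < a * S + b) :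
    ¬ ∀ C : Set (ℝ × ℝ), IsCompact C → IsCompact (γ ⁻¹' C) := fun hproper => by
  have hσσ : σ * σ = 1 := by rw [← abs_mul_abs_self, hσ, one_mul]
  have hu1 : ∀ t, |u t| ≤ 1 := fun t => abs_le_one_iff_mul_self_le_one.2 (by nlinarith [hunit t])
  have hv1 : ∀ t, |v t| ≤ 1 := fun t => abs_le_one_iff_mul_self_le_one.2 (by nlinarith [hunit t])
  have hmem : Set.Ici S ⊆ γ ⁻¹' Metric.closedBall (γ S) (2 / (a * S + b)) := fun t ht => by
    rw [Set.mem_preimage, Metric.mem_closedBall, Prod.dist_eq, Real.dist_eq, Real.dist_eq]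
    refine max_le ?_ ?_
    · exact abs_sub_le_two_div_of_affine_curvature (v := fun r => σ * v r) hx
        (fun r => ((hv r).const_mul σ).congr_deriv
          (by linear_combination (-((a * r + b) * u r)) * hσσ))
        (fun r => by simpa [abs_mul, hσ] using hv1 r) ha hS ht
    · exact abs_sub_le_two_div_of_affine_curvature (v := fun r => -σ * u r) hy
        (fun r => ((hu r).const_mul (-σ)).congr_deriv
          (by linear_combination (-((a * r + b) * v r)) * hσσ))
        (fun r => by simpa [abs_mul, hσ] using hu1 r) ha hS ht
  exact not_bddAbove_Ici S
    ((hproper _ (isCompact_closedBall _ _)).bddAbove.mono hmem)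

lemma eq_affine_of_deriv_deriv_eq_zero {f : ℝ → ℝ} (hf : ContDiff ℝ 2 f)
    (h : ∀ s, deriv (deriv f) s = 0) (s : ℝ) : f s = deriv f 0 * s + f 0 := by
  have hf' : Differentiable ℝ (deriv f) :=
    (hf.iterate_deriv' 1 1).differentiable one_ne_zero
  have hconst : ∀ t, deriv f t = deriv f 0 := fun t => is_const_of_deriv_eq_zero hf' h t 0
  have hderiv : ∀ t, HasDerivAt (fun r => f r - deriv f 0 * r) 0 t := fun t => by
    have := ((hf.differentiable two_ne_zero t).hasDerivAt).sub
      ((hasDerivAt_id t).const_mul (deriv f 0))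
    exact this.congr_deriv (by rw [hconst t]; ring)
  have := is_const_of_deriv_eq_zero (fun t => (hderiv t).differentiableAt)
    (fun t => (hderiv t).deriv) s 0
  simp only [mul_zero, sub_zero] at this
  linarith

/-- a proper open stationary solution of the curve diffusion flow (`κ'' ≡ 0`)
is a straight line. -/
theorem proper_stationary_is_line
    (γ : ℝ → ℝ × ℝ)
    (hsmooth : ContDiff ℝ (⊤ : ℕ∞) γ)
    (hunit : ∀ s, (deriv γ s).1 ^ 2 + (deriv γ s).2 ^ 2 = 1)
    (hproper : ∀ C : Set (ℝ × ℝ), IsCompact C → IsCompact (γ ⁻¹' C))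
    (hstat : ∀ s, deriv (deriv (curvA γ)) s = 0) :
    ∀ s, γ s = γ 0 + s • deriv γ 0 := by
  have hsmooth1 : ContDiff ℝ (⊤ : ℕ∞) (deriv γ) := hsmooth.iterate_deriv 1
  have hsmooth2 : ContDiff ℝ (⊤ : ℕ∞) (deriv (deriv γ)) := hsmooth.iterate_deriv 2
  have hκsmooth : ContDiff ℝ (⊤ : ℕ∞) (curvA γ) := by
    unfold curvA innerP nuA
    fun_prop
  have hγ : ∀ s, HasDerivAt γ (deriv γ s) s := fun s =>
    (hsmooth.differentiable (by simp) s).hasDerivAt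
  have hγ' : ∀ s, HasDerivAt (deriv γ) (deriv (deriv γ) s) s := fun s =>
    (hsmooth1.differentiable (by simp) s).hasDerivAt
  have hx := fun s => (hasFDerivAt_fst (𝕜 := ℝ) (p := γ s)).comp_hasDerivAt s (hγ s)
  have hy := fun s => (hasFDerivAt_snd (𝕜 := ℝ) (p := γ s)).comp_hasDerivAt s (hγ s)
  have hu₀ := fun s => (hasFDerivAt_fst (𝕜 := ℝ) (p := deriv γ s)).comp_hasDerivAt s (hγ' s)
  have hv₀ := fun s => (hasFDerivAt_snd (𝕜 := ℝ) (p := deriv γ s)).comp_hasDerivAt s (hγ' s)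
  have horth : ∀ s, (deriv γ s).1 * (deriv (deriv γ) s).1
      + (deriv γ s).2 * (deriv (deriv γ) s).2 = 0 := fun s => by
    have hderiv := ((hu₀ s).pow 2).add ((hv₀ s).pow 2)
    have hzero := (hasDerivAt_const s (1 : ℝ)).congr_of_eventuallyEq
      (.of_forall fun r => hunit r)
    have := hderiv.unique hzero
    simp at this
    linarith
  obtain ⟨a, b, hκ⟩ : ∃ a b : ℝ, ∀ s, curvA γ s = a * s + b :=
    ⟨_, _, eq_affine_of_deriv_deriv_eq_zero (contDiff_infty.1 hκsmooth 2) hstat⟩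
  have hκ' : ∀ s, (deriv (deriv γ) s).1 * (deriv γ s).2
      - (deriv (deriv γ) s).2 * (deriv γ s).1 = a * s + b := fun s => by
    rw [← hκ s]
    simp only [curvA, innerP, nuA]
    ring
  have hu : ∀ s, HasDerivAt (fun r => (deriv γ r).1) ((a * s + b) * (deriv γ s).2) s := fun s =>
    (hu₀ s).congr_deriv <| by
      simp only [ContinuousLinearMap.coe_fst']
      linear_combination (deriv γ s).2 * hκ' s + (deriv γ s).1 * horth s
        - (deriv (deriv γ) s).1 * hunit s
  have hv : ∀ s, HasDerivAt (fun r => (deriv γ r).2) (-((a * s + b) * (deriv γ s).1)) s :=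
    fun s => (hv₀ s).congr_deriv <| by
      simp only [ContinuousLinearMap.coe_snd']
      linear_combination -(deriv γ s).1 * hκ' s + (deriv γ s).2 * horth s
        - (deriv (deriv γ) s).2 * hunit s
  have hpos : ∀ S, 0 ≤ a → ¬ 0 < a * S + b := fun S ha hS =>
    not_proper_of_affine_curvature hx hy (σ := 1) (by simp)
      (fun s => (hu s).congr_deriv (by simp)) (fun s => (hv s).congr_deriv (by simp))
      hunit ha hS hproper
  have hneg : ∀ S, a ≤ 0 → ¬ 0 < -a * S + -b := fun S ha hS =>
    not_proper_of_affine_curvature hx hy (σ := -1) (by simp)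
      (fun s => (hu s).congr_deriv (by simp; ring)) (fun s => (hv s).congr_deriv (by simp; ring))
      hunit (neg_nonneg.2 ha) hS hproper
  have ha : a = 0 := by
    by_contra hne
    have hS : a * ((1 - b) / a) + b = 1 := by field_simp; ring
    have hS' : -a * ((-1 - b) / a) + -b = 1 := by field_simp; ring
    rcases le_total 0 a with h | h
    · exact hpos _ h (hS ▸ one_pos)
    · exact hneg _ h (hS' ▸ one_pos)
  have hb : b = 0 := by
    have h1 := hpos 0 ha.ge
    have h2 := hneg 0 ha.le
    simp only [mul_zero, zero_add, not_lt] at h1 h2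
    linarith
  subst ha hb
  have hconst : ∀ s, deriv γ s = deriv γ 0 := fun s =>
    Prod.ext
      (is_const_of_deriv_eq_zero (fun t => (hu t).differentiableAt)
        (fun t => by simpa using (hu t).deriv) s 0)
      (is_const_of_deriv_eq_zero (fun t => (hv t).differentiableAt)
        (fun t => by simpa using (hv t).deriv) s 0)
  have hline : ∀ s, HasDerivAt (fun r => γ r - r • deriv γ 0) 0 s := fun s =>
    ((hγ s).sub ((hasDerivAt_id s).smul_const (deriv γ 0))).congr_deriv (by simp [hconst s])
  intro s
  have := is_const_of_deriv_eq_zero (fun t => (hline t).differentiableAt)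
    (fun t => (hline t).deriv) s 0
  simp only [zero_smul, sub_zero] at this
  exact sub_eq_iff_eq_add.1 this
end

section
/- Let γ₀ : ℝ → ℝ² be a smooth closed regular plane curve parametrised by arc length with unit normal ν₀ and curvature κ₀, and suppose there is a constant K ∈ ℝ such that κ₀''(s) = −K ⟨γ₀(s), ν₀(s)⟩ for all s. Fix ρ > 0 and set f(t) = (ρ⁴ + 4Kt)^{1/4}. Then for all t with ρ⁴ + 4Kt > 0, the family γ(u,t) := f(t) γ₀(u) satisfies the curve diffusion flow equation in normal direction: ⟨∂_t γ(u,t), ν(u,t)⟩ = −κ_ss(u,t), where ν, κ, and the arc-length derivative are those of the curve γ(·,t). -/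
open Real MeasureTheory Filter

section Homothety

variable {γ : ℝ → ℝ × ℝ} {c : ℝ}

/-- Scaling an arc-length curve by `c > 0` gives constant speed `c`. -/
lemma speed_const_smul (hunit : ∀ s, (deriv γ s).1 ^ 2 + (deriv γ s).2 ^ 2 = 1) (hc : 0 < c)
    (u : ℝ) : speed (fun v => c • γ v) u = c := by
  have h : (c * (deriv γ u).1) ^ 2 + (c * (deriv γ u).2) ^ 2 = c ^ 2 := by
    linear_combination c ^ 2 * hunit u
  simp only [speed, deriv_fun_const_smul_field, Prod.smul_fst, Prod.smul_snd, smul_eq_mul, h]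
  exact Real.sqrt_sq hc.le

/-- The unit normal is invariant under scaling. -/
lemma nuG_const_smul (hunit : ∀ s, (deriv γ s).1 ^ 2 + (deriv γ s).2 ^ 2 = 1) (hc : 0 < c)
    (u : ℝ) : nuG (fun v => c • γ v) u = nuA γ u := by
  have hc' := hc.ne'
  simp only [nuG, nuA, speed_const_smul hunit hc, deriv_fun_const_smul_field, Prod.smul_fst,
    Prod.smul_snd, smul_eq_mul]
  ext <;> field_simp

/-- The curvature scales by `c⁻¹`. -/
lemma curvG_const_smul (hunit : ∀ s, (deriv γ s).1 ^ 2 + (deriv γ s).2 ^ 2 = 1) (hc : 0 < c) :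
    curvG (fun v => c • γ v) = fun u => c⁻¹ * curvA γ u := by
  have hT : arcDV (fun v => c • γ v) (fun v => c • γ v) = deriv γ := by
    funext u
    rw [arcDV, speed_const_smul hunit hc, deriv_fun_const_smul_field, inv_smul_smul₀ hc.ne']
  funext u
  simp only [curvG, hT, nuG_const_smul hunit hc, arcDV, speed_const_smul hunit hc, curvA, innerP,
    Prod.smul_fst, Prod.smul_snd, smul_eq_mul]
  ring

/-- The second arc-length derivative of the curvature scales by `c⁻³`. -/
lemma curvGSS_const_smul (hunit : ∀ s, (deriv γ s).1 ^ 2 + (deriv γ s).2 ^ 2 = 1) (hc : 0 < c)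
    (u : ℝ) : curvGSS (fun v => c • γ v) u = (c ^ 3)⁻¹ * deriv (deriv (curvA γ)) u := by
  have hS : curvGS (fun v => c • γ v) = fun v => c⁻¹ * (c⁻¹ * deriv (curvA γ) v) := by
    funext v
    rw [curvGS, arcD, speed_const_smul hunit hc, curvG_const_smul hunit hc,
      deriv_const_mul_field]
  rw [curvGSS, arcD, speed_const_smul hunit hc, hS, deriv_const_mul_field, deriv_const_mul_field]
  ring

end Homothety

/-- The fourth root of `a + 4Kt` solves `f' = K f⁻³` where `a + 4Kt` is positive. -/
lemma hasDerivAt_fourth_root_affine {a K t : ℝ} (ht : 0 < a + 4 * K * t) :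
    HasDerivAt (fun s => (a + 4 * K * s) ^ ((1:ℝ)/4))
      (K * (((a + 4 * K * t) ^ ((1:ℝ)/4)) ^ 3)⁻¹) t := by
  have h : HasDerivAt (fun s => a + 4 * K * s) (4 * K) t := by
    simpa using ((hasDerivAt_id t).const_mul (4 * K)).const_add a
  convert h.rpow_const (p := (1:ℝ)/4) (Or.inl ht.ne') using 1
  rw [← Real.rpow_natCast, ← Real.rpow_mul ht.le, ← Real.rpow_neg ht.le]
  have he : -((1:ℝ) / 4 * (3 : ℕ)) = 1 / 4 - 1 := by norm_num
  rw [he]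
  ring

/-- if the closed arc-length curve `γ₀` satisfies the shrinker equation
`κ₀'' = −K ⟨γ₀, ν₀⟩`, then with `f(t) = (ρ⁴ + 4Kt)^{1/4}` the homothetic family
`γ(u,t) = f(t) γ₀(u)` satisfies the curve diffusion flow equation in the normal direction. -/
theorem homothetic_solution_of_shrinker_equation
    (γ₀ : ℝ → ℝ × ℝ) (L : ℝ) (hL : 0 < L)
    (hsmooth : ContDiff ℝ (⊤ : ℕ∞) γ₀)
    (hunit : ∀ s, (deriv γ₀ s).1 ^ 2 + (deriv γ₀ s).2 ^ 2 = 1)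
    (hper : ∀ s, γ₀ (s + L) = γ₀ s)
    (K : ℝ)
    (hself : ∀ s, deriv (deriv (curvA γ₀)) s = -K * innerP (γ₀ s) (nuA γ₀ s))
    (ρ : ℝ) (hρ : 0 < ρ)
    (f : ℝ → ℝ) (hf : ∀ t, f t = (ρ ^ 4 + 4 * K * t) ^ ((1:ℝ)/4)) :
    ∀ t : ℝ, 0 < ρ ^ 4 + 4 * K * t →
      ∀ u : ℝ,
        innerP (deriv (fun t' => f t' • γ₀ u) t) (nuG (fun u' => f t • γ₀ u') u)
          = - curvGSS (fun u' => f t • γ₀ u') u := by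
  intro t ht u
  have hc : 0 < f t := by
    rw [hf]
    exact Real.rpow_pos_of_pos ht _
  have hd : HasDerivAt f (K * (f t ^ 3)⁻¹) t := by
    rw [hf t, funext hf]
    exact hasDerivAt_fourth_root_affine ht
  rw [(hd.smul_const (γ₀ u)).deriv, nuG_const_smul hunit hc, curvGSS_const_smul hunit hc, hself]
  simp only [innerP, Prod.smul_fst, Prod.smul_snd, smul_eq_mul]
  ring
end

section
/- Let γ : ℝ → ℝ² be a smooth closed regular plane curve parametrised by arc length with period L > 0, and let V ∈ ℝ² be a constant vector such that −κ''(s) = ⟨V, ν(s)⟩ for all s ∈ ℝ (γ is a translator for the curve diffusion flow with velocity V). Then V = 0 and γ is a round circle: there exist c ∈ ℝ² and R > 0 with ‖γ(s) − c‖ = R for all s. -/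
open Real MeasureTheory Filter

/-- A monotone periodic function is constant. -/
theorem Monotone.eq_of_periodic {f : ℝ → ℝ} {L : ℝ} (hf : Monotone f)
    (hper : Function.Periodic f L) (hL : 0 < L) (s t : ℝ) : f s = f t := by
  have key : ∀ a b, f a ≤ f b := fun a b => by
    obtain ⟨n, hn⟩ := exists_nat_ge ((a - b) / L)
    rw [div_le_iff₀ hL] at hn
    calc f a ≤ f (b + n * L) := hf (by linarith)
      _ = f b := hper.nat_mul n b
  exact le_antisymm (key s t) (key t s)

/-- The derivative of a periodic function vanishes if it is nonnegative. -/
theorem eq_zero_of_hasDerivAt_nonneg_of_periodic {f f' : ℝ → ℝ} {L : ℝ}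
    (hf : ∀ s, HasDerivAt f (f' s) s) (hf' : ∀ s, 0 ≤ f' s)
    (hper : Function.Periodic f L) (hL : 0 < L) (s : ℝ) : f' s = 0 := by
  have hconst : f = fun _ => f 0 :=
    funext fun t => (monotone_of_hasDerivAt_nonneg hf hf').eq_of_periodic hper hL t 0
  have h := hf s
  rw [hconst] at h
  exact h.unique (hasDerivAt_const s (f 0))

theorem Function.Periodic.deriv_periodic {F : Type*} [NormedAddCommGroup F] [NormedSpace ℝ F]
    {f : ℝ → F} {L : ℝ} (hf : Function.Periodic f L) : Function.Periodic (deriv f) L := fun s => by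
  rw [← deriv_comp_add_const, funext hf]

theorem eq_of_hasDerivAt_zero {f : ℝ → ℝ} (hf : ∀ s, HasDerivAt f 0 s) (s t : ℝ) : f s = f t :=
  is_const_of_deriv_eq_zero (fun s => (hf s).differentiableAt) (fun s => (hf s).deriv) s t

/-- a smooth closed translator for the curve diffusion flow
(`−κ'' = ⟨V, ν⟩`) is trivial: `V = 0` and the curve is a round circle. -/
theorem closed_translator_is_trivial
    (γ : ℝ → ℝ × ℝ) (L : ℝ) (hL : 0 < L)
    (hsmooth : ContDiff ℝ (⊤ : ℕ∞) γ)
    (hunit : ∀ s, (deriv γ s).1 ^ 2 + (deriv γ s).2 ^ 2 = 1)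
    (hper : ∀ s, γ (s + L) = γ s)
    (V : ℝ × ℝ)
    (htrans : ∀ s, -(deriv (deriv (curvA γ)) s) = innerP V (nuA γ s)) :
    V = 0 ∧ ∃ c : ℝ × ℝ, ∃ R : ℝ, 0 < R ∧
      ∀ s, Real.sqrt (((γ s).1 - c.1) ^ 2 + ((γ s).2 - c.2) ^ 2) = R := by
  have hγ : ∀ s, HasDerivAt γ (deriv γ s) s := fun s =>
    (hsmooth.differentiable (by simp) s).hasDerivAt
  have hT : ContDiff ℝ (⊤ : ℕ∞) (deriv γ) := (contDiff_infty_iff_deriv.1 hsmooth).2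
  have hT' : ContDiff ℝ (⊤ : ℕ∞) (deriv (deriv γ)) := (contDiff_infty_iff_deriv.1 hT).2
  have hγ' : ∀ s, HasDerivAt (deriv γ) (deriv (deriv γ) s) s := fun s =>
    (hT.differentiable (by simp) s).hasDerivAt
  have hx : ∀ s, HasDerivAt (fun s => (γ s).1) (deriv γ s).1 s := fun s => (hγ s).fst
  have hy : ∀ s, HasDerivAt (fun s => (γ s).2) (deriv γ s).2 s := fun s => (hγ s).snd
  have hx' : ∀ s, HasDerivAt (fun s => (deriv γ s).1) (deriv (deriv γ) s).1 s :=
    fun s => (hγ' s).fst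
  have hy' : ∀ s, HasDerivAt (fun s => (deriv γ s).2) (deriv (deriv γ) s).2 s :=
    fun s => (hγ' s).snd
  have hκ : ∀ s, curvA γ s = (deriv (deriv γ) s).1 * (deriv γ s).2
      - (deriv (deriv γ) s).2 * (deriv γ s).1 := fun s => by
    simp only [curvA, innerP, nuA]; ring
  have horth : ∀ s, (deriv γ s).1 * (deriv (deriv γ) s).1
      + (deriv γ s).2 * (deriv (deriv γ) s).2 = 0 := fun s => by
    have h := ((hx' s).pow 2).add ((hy' s).pow 2)
    have h1 : ((fun s => (deriv γ s).1) ^ 2 + (fun s => (deriv γ s).2) ^ 2) = fun _ => (1 : ℝ) :=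
      funext hunit
    rw [h1] at h
    have h2 := h.unique (hasDerivAt_const s (1 : ℝ))
    norm_num at h2
    linarith
  -- The Frenet equations
  have hF1 : ∀ s, (deriv (deriv γ) s).1 = curvA γ s * (deriv γ s).2 := fun s => by
    rw [hκ]
    linear_combination (deriv γ s).1 * horth s - (deriv (deriv γ) s).1 * hunit s
  have hF2 : ∀ s, (deriv (deriv γ) s).2 = -(curvA γ s * (deriv γ s).1) := fun s => by
    rw [hκ]
    linear_combination (deriv γ s).2 * horth s - (deriv (deriv γ) s).2 * hunit s
  simp only [hF1] at hx'
  simp only [hF2] at hy'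
  have hκsmooth : ContDiff ℝ (⊤ : ℕ∞) (curvA γ) := by
    rw [funext hκ]
    exact (hT'.fst.mul hT.snd).sub (hT'.snd.mul hT.fst)
  have hκ1 : ∀ s, HasDerivAt (curvA γ) (deriv (curvA γ) s) s := fun s =>
    (hκsmooth.differentiable (by simp) s).hasDerivAt
  have hκ2 : ∀ s, HasDerivAt (deriv (curvA γ)) (deriv (deriv (curvA γ)) s) s := fun s =>
    ((contDiff_infty_iff_deriv.1 hκsmooth).2.differentiable (by simp) s).hasDerivAt
  have hγper : Function.Periodic γ L := hper
  have hTper := hγper.deriv_periodic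
  have hκper : Function.Periodic (curvA γ) L := fun s => by
    rw [hκ, hκ, hTper.deriv_periodic s, hTper s]
  have hκ'per := hκper.deriv_periodic
  -- `κ κ' + ⟨V, γ'⟩` is periodic with derivative `κ' ^ 2`
  have hκ' : ∀ s, deriv (curvA γ) s = 0 := by
    have hderiv : ∀ s, HasDerivAt (fun s => curvA γ s * deriv (curvA γ) s
        + (V.1 * (deriv γ s).1 + V.2 * (deriv γ s).2)) (deriv (curvA γ) s ^ 2) s := fun s => by
      refine (((hκ1 s).mul (hκ2 s)).add
        (((hx' s).const_mul V.1).add ((hy' s).const_mul V.2))).congr_deriv ?_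
      have h := htrans s
      simp only [innerP, nuA] at h
      linear_combination -curvA γ s * h
    intro s
    refine pow_eq_zero_iff two_ne_zero |>.1 <| eq_zero_of_hasDerivAt_nonneg_of_periodic hderiv
      (fun s => sq_nonneg _) (fun s => ?_) hL s
    simp only [hκper s, hκ'per s, hTper s]
  obtain ⟨k, hk⟩ : ∃ k, ∀ s, curvA γ s = k :=
    ⟨curvA γ 0, fun s => eq_of_hasDerivAt_zero (fun s => (hκ1 s).congr_deriv (hκ' s)) s 0⟩
  simp only [hk] at hx' hy'
  have hk0 : k ≠ 0 := by
    -- a curve of zero curvature has constant tangent, which integrates to zero over a period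
    rintro rfl
    simp only [zero_mul, neg_zero] at hx' hy'
    have hdir : ∀ {u v : ℝ → ℝ}, (∀ s, HasDerivAt u (v s) s) → (∀ s, HasDerivAt v 0 s) →
        Function.Periodic u L → v 0 = 0 := fun {u v} hu hv hp => by
      have h := eq_of_hasDerivAt_zero (f := fun s => u s - v 0 * s) (fun s =>
        ((hu s).sub ((hasDerivAt_id s).const_mul (v 0))).congr_deriv (by
          rw [eq_of_hasDerivAt_zero hv s 0]; ring)) (0 + L) 0
      simp only [hp 0] at h
      have h2 : v 0 * L = 0 := by linarith
      exact (mul_eq_zero.1 h2).resolve_right hL.ne'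
    have h1 := hdir hx hx' fun s => by simp only [hper s]
    have h2 := hdir hy hy' fun s => by simp only [hper s]
    have h3 := hunit 0
    rw [h1, h2] at h3
    norm_num at h3
  have hVν : ∀ s, V.1 * (deriv γ s).2 - V.2 * (deriv γ s).1 = 0 := fun s => by
    have h := htrans s
    rw [show deriv (curvA γ) = fun _ => 0 from funext hκ', deriv_const] at h
    simp only [innerP, nuA] at h
    linarith
  have hVT : ∀ s, V.1 * (deriv γ s).1 + V.2 * (deriv γ s).2 = 0 := fun s => by
    have h := ((hy' s).const_mul V.1).sub ((hx' s).const_mul V.2)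
    have h2 := (h.congr_of_eventuallyEq (f₁ := fun _ => 0)
      (Filter.Eventually.of_forall fun t => (hVν t).symm)).unique (hasDerivAt_const s (0 : ℝ))
    exact (mul_eq_zero.1 (show k * _ = 0 by linear_combination -h2)).resolve_left hk0
  refine ⟨Prod.ext ?_ ?_, ((γ 0).1 + (deriv γ 0).2 / k, (γ 0).2 - (deriv γ 0).1 / k), 1 / |k|,
    by positivity, fun s => ?_⟩
  · show V.1 = 0
    linear_combination (deriv γ 0).1 * hVT 0 + (deriv γ 0).2 * hVν 0 - V.1 * hunit 0
  · show V.2 = 0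
    linear_combination (deriv γ 0).2 * hVT 0 - (deriv γ 0).1 * hVν 0 - V.2 * hunit 0
  · have h1 := eq_of_hasDerivAt_zero (f := fun s => (γ s).1 + (deriv γ s).2 / k) (fun s =>
      ((hx s).add ((hy' s).div_const k)).congr_deriv (by field_simp; ring)) 0 s
    have h2 := eq_of_hasDerivAt_zero (f := fun s => (γ s).2 - (deriv γ s).1 / k) (fun s =>
      ((hy s).sub ((hx' s).div_const k)).congr_deriv (by field_simp; ring)) 0 s
    simp only [h1, h2]
    rw [show 1 / |k| = √((1 / k) ^ 2) by rw [Real.sqrt_sq_eq_abs, abs_div, abs_one]]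
    congr 1
    linear_combination (1 / k) ^ 2 * hunit s
end
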